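/- Let d ≥ 2, let u be a heat kernel on S^{d-1}, let ω : (0,∞) → [0,∞) be measurable with ∫₀^∞ ω(t)(1 − e^{−2dt}) dt < ∞, and let b(c) := ∫₀^∞ u(t,c) ω(t) dt. Then for every smooth F : S^{d-1} → ℝ with F(−σ) = F(σ): ∬_{S^{d-1}×S^{d-1}} (F(σ') − F(σ))² b(σ'·σ) dσ' dσ ≤ C_P ∫_{S^{d-1}} |∇_σ F|² dσ, where C_P = ∫₀^∞ ω(t)(1 − e^{−2dt})/d dt. -/

import Mathlib

open MeasureTheory
open scoped RealInnerProductSpace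

noncomputable section

/-- Euclidean space `ℝ^d`. -/
abbrev E (d : ℕ) : Type := EuclideanSpace ℝ (Fin d)

/-- The unit sphere `S^{d-1}` of `ℝ^d`. -/
abbrev Sph (d : ℕ) : Type := Metric.sphere (0 : E d) 1

/-- The surface measure on the unit sphere, realized as a Hausdorff measure. -/
def sphMeasure (d : ℕ) : Measure (Sph d) := μH[(d : ℝ) - 1]

open Classical in
/-- The 0-homogeneous extension of a function defined on the unit sphere. -/
def homogExt {d : ℕ} (F : Sph d → ℝ) (x : E d) : ℝ :=
  if hx : x = 0 then 0
  else F ⟨‖x‖⁻¹ • x, by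
    rw [mem_sphere_zero_iff_norm, norm_smul, norm_inv, norm_norm,
      inv_mul_cancel₀ (norm_ne_zero_iff.mpr hx)]⟩

/-- Smoothness of a function on the sphere, via its 0-homogeneous extension. -/
def SphSmooth {d : ℕ} (F : Sph d → ℝ) : Prop :=
  ContDiffOn ℝ (⊤ : ℕ∞) (homogExt F) {x : E d | x ≠ 0}

/-- Spherical gradient: the Euclidean gradient of the 0-homogeneous extension. -/
def sphGrad {d : ℕ} (F : Sph d → ℝ) (σ : Sph d) : E d :=
  gradient (homogExt F) (σ : E d)

/-- Euclidean Laplacian of a function on `ℝ^d`. -/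
def lapl {d : ℕ} (f : E d → ℝ) (x : E d) : ℝ :=
  ∑ i : Fin d,
    fderiv ℝ (fun y => fderiv ℝ f y (EuclideanSpace.single i 1)) x (EuclideanSpace.single i 1)

/-- Spherical Laplacian: the Euclidean Laplacian of the 0-homogeneous extension. -/
def sphLap {d : ℕ} (F : Sph d → ℝ) (σ : Sph d) : ℝ :=
  lapl (homogExt F) (σ : E d)

/-- The spherical linear Boltzmann operator `𝓑` with kernel `b`. -/
def sphB {d : ℕ} (b : ℝ → ℝ) (F : Sph d → ℝ) (σ : Sph d) : ℝ :=
  ∫ (σ' : Sph d), (F σ' - F σ) * b ⟪(σ' : E d), (σ : E d)⟫ ∂(sphMeasure d)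

/-- The intertwined iterated carré du champ `Γ²_{𝓑,Δ}(g,g)`. -/
def Gamma2BD {d : ℕ} (b : ℝ → ℝ) (g : Sph d → ℝ) (σ : Sph d) : ℝ :=
  (1 / 2) * sphB b (fun τ => ‖sphGrad g τ‖ ^ 2) σ
    - ⟪sphGrad g σ, sphGrad (fun τ => sphB b g τ) σ⟫

/-- The iterated carré du champ `Γ²_{Δ,Δ}(g,g)` of the spherical Laplacian. -/
def Gamma2DD {d : ℕ} (g : Sph d → ℝ) (σ : Sph d) : ℝ :=
  (1 / 2) * sphLap (fun τ => ‖sphGrad g τ‖ ^ 2) σ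
    - ⟪sphGrad g σ, sphGrad (fun τ => sphLap g τ) σ⟫

/-- A collision kernel: non-negative, measurable, satisfying the Lévy condition. -/
def LevyKernel (d : ℕ) (b : ℝ → ℝ) : Prop :=
  Measurable b ∧ (∀ c ∈ Set.Icc (-1 : ℝ) 1, 0 ≤ b c) ∧
    ∀ e : Sph d,
      Integrable
        (fun σ' : Sph d => (1 - ⟪(e : E d), (σ' : E d)⟫ ^ 2) * b ⟪(e : E d), (σ' : E d)⟫)
        (sphMeasure d)

/-- The log-Sobolev inequality `LS(Λ, b)` on the sphere. -/
def LS (d : ℕ) (b : ℝ → ℝ) (Λ : ℝ) : Prop :=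
  ∀ f : Sph d → ℝ, SphSmooth f → (∀ σ, 0 < f σ) → (∀ σ, f (-σ) = f σ) →
    Λ * ∫ (σ : Sph d), (∫ (σ' : Sph d),
          (f σ' - f σ) ^ 2 / (f σ' + f σ) * b ⟪(σ' : E d), (σ : E d)⟫ ∂(sphMeasure d))
        ∂(sphMeasure d)
      ≤ ∫ (σ : Sph d), Gamma2BD b (fun τ => Real.log (f τ)) σ * f σ ∂(sphMeasure d)

/-- Action of a heat kernel `u` on a function on the sphere. -/
def heatU {d : ℕ} (u : ℝ → ℝ → ℝ) (f : Sph d → ℝ) (t : ℝ) (σ : Sph d) : ℝ :=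
  ∫ (σ' : Sph d), f σ' * u t ⟪(σ' : E d), (σ : E d)⟫ ∂(sphMeasure d)

/-- `u` is a heat kernel on the sphere `S^{d-1}`: it is non-negative, measurable, and for every
smooth `f` the function `U(t,σ) = ∫ f(σ') u(t, σ'·σ) dσ'` is jointly smooth on `(0,∞) × S^{d-1}`,
solves the heat equation, and converges uniformly to `f` as `t → 0⁺`. -/
def IsHeatKernel (d : ℕ) (u : ℝ → ℝ → ℝ) : Prop :=
  (∀ t, 0 < t → ∀ c ∈ Set.Icc (-1 : ℝ) 1, 0 ≤ u t c) ∧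
  Measurable (fun p : ℝ × ℝ => u p.1 p.2) ∧
  ∀ f : Sph d → ℝ, SphSmooth f →
    ContDiffOn ℝ (⊤ : ℕ∞) (fun p : ℝ × E d => homogExt (fun σ => heatU u f p.1 σ) p.2)
      (Set.Ioi (0 : ℝ) ×ˢ {x : E d | x ≠ 0}) ∧
    (∀ t, 0 < t → ∀ σ : Sph d,
      HasDerivAt (fun s => heatU u f s σ) (sphLap (fun τ => heatU u f t τ) σ) t) ∧
    TendstoUniformly (fun t (σ : Sph d) => heatU u f t σ) f (nhdsWithin 0 (Set.Ioi 0))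

/-- The subordinate kernel `b(c) = ∫₀^∞ u(t,c) ω(t) dt`. -/
def subordKernel (u : ℝ → ℝ → ℝ) (ω : ℝ → ℝ) (c : ℝ) : ℝ :=
  ∫ t in Set.Ioi (0 : ℝ), u t c * ω t

section SphereCalculus

variable {d : ℕ}

/-- The `i`-th component of the spherical gradient. -/
def sphD (i : Fin d) (F : Sph d → ℝ) (σ : Sph d) : ℝ :=
  fderiv ℝ (homogExt F) (σ : E d) (EuclideanSpace.single i 1)

/-- The `i`-th coordinate function on the sphere. -/
def sphX (i : Fin d) (σ : Sph d) : ℝ := (σ : E d) i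

lemma Sph.ne_zero (σ : Sph d) : (σ : E d) ≠ 0 := by
  intro h
  have := norm_eq_of_mem_sphere σ
  rw [h] at this
  simp at this

lemma isOpen_ne_zero : IsOpen {x : E d | x ≠ 0} := isOpen_ne

/-- Radial projection of a nonzero vector to the sphere. -/
def sphProj (x : E d) (hx : x ≠ 0) : Sph d :=
  ⟨‖x‖⁻¹ • x, by
    rw [mem_sphere_zero_iff_norm, norm_smul, norm_inv, norm_norm,
      inv_mul_cancel₀ (norm_ne_zero_iff.mpr hx)]⟩

lemma homogExt_of_ne (F : Sph d → ℝ) {x : E d} (hx : x ≠ 0) :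
    homogExt F x = F (sphProj x hx) := dif_neg hx

@[simp] lemma homogExt_zero (F : Sph d → ℝ) : homogExt F 0 = 0 := dif_pos rfl

lemma sphProj_coe (σ : Sph d) : sphProj (σ : E d) σ.ne_zero = σ := by
  ext1
  simp [sphProj]

@[simp] lemma homogExt_coe (F : Sph d → ℝ) (σ : Sph d) : homogExt F σ = F σ := by
  rw [homogExt_of_ne F σ.ne_zero, sphProj_coe]

lemma sphProj_smul {c : ℝ} (hc : 0 < c) {x : E d} (hx : x ≠ 0) :
    sphProj (c • x) (smul_ne_zero hc.ne' hx) = sphProj x hx := by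
  ext1
  simp only [sphProj, norm_smul, Real.norm_eq_abs, abs_of_pos hc, smul_smul]
  congr 1
  field_simp

lemma homogExt_smul (F : Sph d → ℝ) {c : ℝ} (hc : 0 < c) (x : E d) :
    homogExt F (c • x) = homogExt F x := by
  by_cases hx : x = 0
  · simp [hx]
  · rw [homogExt_of_ne F hx, homogExt_of_ne F (smul_ne_zero hc.ne' hx), sphProj_smul hc hx]

lemma fderiv_homogExt_smul (F : Sph d → ℝ) {c : ℝ} (hc : 0 < c) (x : E d) :
    fderiv ℝ (homogExt F) (c • x) = c⁻¹ • fderiv ℝ (homogExt F) x := by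
  have h := fderiv_comp_smul (𝕜 := ℝ) (f := homogExt F) (x := x) c
  have h2 : (fun y => homogExt F (c • y)) = homogExt F := funext fun y => homogExt_smul F hc y
  rw [h2] at h
  rw [h, smul_smul, inv_mul_cancel₀ hc.ne', one_smul]

lemma homogExt_sphD (i : Fin d) (F : Sph d → ℝ) {x : E d} (hx : x ≠ 0) :
    homogExt (sphD i F) x = ‖x‖ * fderiv ℝ (homogExt F) x (EuclideanSpace.single i 1) := by
  rw [homogExt_of_ne _ hx, sphD, sphProj,
    fderiv_homogExt_smul F (inv_pos.2 (norm_pos_iff.2 hx)), inv_inv]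
  rfl

lemma homogExt_sphX (i : Fin d) (x : E d) : homogExt (sphX i) x = ‖x‖⁻¹ * x i := by
  by_cases hx : x = 0
  · simp [hx]
  · rw [homogExt_of_ne _ hx]; rfl

lemma homogExt_mul (F G : Sph d → ℝ) :
    homogExt (fun σ => F σ * G σ) = fun x => homogExt F x * homogExt G x := by
  ext x
  by_cases hx : x = 0
  · simp [hx]
  · simp only [homogExt_of_ne _ hx]

lemma homogExt_add (F G : Sph d → ℝ) :
    homogExt (fun σ => F σ + G σ) = fun x => homogExt F x + homogExt G x := by
  ext x
  by_cases hx : x = 0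
  · simp [hx]
  · simp only [homogExt_of_ne _ hx]

lemma SphSmooth.contDiffAt {F : Sph d → ℝ} (hF : SphSmooth F) {x : E d} (hx : x ≠ 0) :
    ContDiffAt ℝ (⊤ : ℕ∞) (homogExt F) x :=
  (hF x hx).contDiffAt (isOpen_ne_zero.mem_nhds hx)

lemma SphSmooth.differentiableAt {F : Sph d → ℝ} (hF : SphSmooth F) {x : E d} (hx : x ≠ 0) :
    DifferentiableAt ℝ (homogExt F) x :=
  (hF.contDiffAt hx).differentiableAt (by simp)

lemma SphSmooth.mul {F G : Sph d → ℝ} (hF : SphSmooth F) (hG : SphSmooth G) :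
    SphSmooth (fun σ => F σ * G σ) := by
  unfold SphSmooth
  rw [homogExt_mul]
  exact ContDiffOn.mul hF hG

lemma SphSmooth.add {F G : Sph d → ℝ} (hF : SphSmooth F) (hG : SphSmooth G) :
    SphSmooth (fun σ => F σ + G σ) := by
  unfold SphSmooth
  rw [homogExt_add]
  exact ContDiffOn.add hF hG

lemma sphSmooth_const (c : ℝ) : SphSmooth (fun _ : Sph d => c) :=
  (contDiffOn_const (c := c)).congr fun _ hx => homogExt_of_ne _ hx

lemma SphSmooth.const_mul {F : Sph d → ℝ} (hF : SphSmooth F) (c : ℝ) :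
    SphSmooth (fun σ => c * F σ) := (sphSmooth_const c).mul hF

lemma SphSmooth.sub {F G : Sph d → ℝ} (hF : SphSmooth F) (hG : SphSmooth G) :
    SphSmooth (fun σ => F σ - G σ) := by
  simpa [sub_eq_add_neg] using hF.add (hG.const_mul (-1))

lemma sphSmooth_sum {ι : Type*} (s : Finset ι) {F : ι → Sph d → ℝ}
    (hF : ∀ i ∈ s, SphSmooth (F i)) : SphSmooth (fun σ => ∑ i ∈ s, F i σ) := by
  classical
  induction s using Finset.induction_on with
  | empty => simpa using sphSmooth_const 0
  | insert a s ha ih =>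
    simp only [Finset.sum_insert ha]
    exact (hF a (by simp)).add (ih fun i hi => hF i (by simp [hi]))

lemma sphSmooth_sphX (i : Fin d) : SphSmooth (sphX i) := by
  have h : homogExt (sphX i) = fun x : E d => ‖x‖⁻¹ * x i := funext (homogExt_sphX i)
  unfold SphSmooth
  rw [h]
  intro x hx
  refine ContDiffAt.contDiffWithinAt (ContDiffAt.mul ?_ ?_)
  · exact (contDiffAt_norm ℝ hx).inv (norm_ne_zero_iff.2 hx)
  · exact (EuclideanSpace.proj (𝕜 := ℝ) i).contDiff.contDiffAt

lemma SphSmooth.sphD_smooth {F : Sph d → ℝ} (hF : SphSmooth F) (i : Fin d) :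
    SphSmooth (sphD i F) := by
  intro x hx
  refine ContDiffAt.contDiffWithinAt ?_
  have h : ContDiffAt ℝ (⊤ : ℕ∞)
      (fun x : E d => ‖x‖ * fderiv ℝ (homogExt F) x (EuclideanSpace.single i 1)) x := by
    refine (contDiffAt_norm ℝ hx).mul ?_
    exact ((hF.contDiffAt hx).fderiv_right (m := (⊤ : ℕ∞)) (by simp)).clm_apply contDiffAt_const
  refine h.congr_of_eventuallyEq ?_
  filter_upwards [isOpen_ne_zero.mem_nhds hx] with y hy using homogExt_sphD i F hy

lemma SphSmooth.continuous {F : Sph d → ℝ} (hF : SphSmooth F) : Continuous F := by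
  have h : F = fun σ : Sph d => homogExt F σ := by ext; simp
  rw [h, continuous_iff_continuousAt]
  exact fun σ => ContinuousAt.comp (f := fun σ : Sph d => (σ : E d))
    (hF.differentiableAt σ.ne_zero).continuousAt continuous_subtype_val.continuousAt

lemma sphD_mul {F G : Sph d → ℝ} (hF : SphSmooth F) (hG : SphSmooth G) (i : Fin d) (σ : Sph d) :
    sphD i (fun τ => F τ * G τ) σ = F σ * sphD i G σ + G σ * sphD i F σ := by
  rw [sphD, homogExt_mul,
    fderiv_fun_mul (hF.differentiableAt σ.ne_zero) (hG.differentiableAt σ.ne_zero)]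
  simp [sphD]

lemma sphD_add {F G : Sph d → ℝ} (hF : SphSmooth F) (hG : SphSmooth G) (i : Fin d) (σ : Sph d) :
    sphD i (fun τ => F τ + G τ) σ = sphD i F σ + sphD i G σ := by
  rw [sphD, homogExt_add,
    fderiv_fun_add (hF.differentiableAt σ.ne_zero) (hG.differentiableAt σ.ne_zero)]
  simp [sphD]

lemma sphD_const (c : ℝ) (i : Fin d) (σ : Sph d) : sphD i (fun _ => c) σ = 0 := by
  have h : homogExt (fun _ : Sph d => c) =ᶠ[nhds (σ : E d)] fun _ => c := by
    filter_upwards [isOpen_ne_zero.mem_nhds σ.ne_zero] with y hy using homogExt_of_ne _ hy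
  rw [sphD, h.fderiv_eq]
  simp

lemma sphD_const_mul {F : Sph d → ℝ} (hF : SphSmooth F) (c : ℝ) (i : Fin d) (σ : Sph d) :
    sphD i (fun τ => c * F τ) σ = c * sphD i F σ := by
  rw [sphD_mul (sphSmooth_const c) hF, sphD_const]; ring

lemma sphD_sub {F G : Sph d → ℝ} (hF : SphSmooth F) (hG : SphSmooth G) (i : Fin d) (σ : Sph d) :
    sphD i (fun τ => F τ - G τ) σ = sphD i F σ - sphD i G σ := by
  have := sphD_add hF (hG.const_mul (-1)) i σ
  rw [sphD_const_mul hG] at this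
  simpa [sub_eq_add_neg] using this

lemma sphD_sum {ι : Type*} (s : Finset ι) {F : ι → Sph d → ℝ}
    (hF : ∀ j ∈ s, SphSmooth (F j)) (i : Fin d) (σ : Sph d) :
    sphD i (fun τ => ∑ j ∈ s, F j τ) σ = ∑ j ∈ s, sphD i (F j) σ := by
  classical
  induction s using Finset.induction_on with
  | empty => simpa using sphD_const 0 i σ
  | insert a s ha ih =>
    simp only [Finset.sum_insert ha]
    rw [sphD_add (hF a (by simp)) (sphSmooth_sum s fun i hi => hF i (by simp [hi])),
      ih fun i hi => hF i (by simp [hi])]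

lemma fderiv_norm_single {x : E d} (hx : x ≠ 0) (i : Fin d) :
    fderiv ℝ (fun y : E d => ‖y‖) x (EuclideanSpace.single i 1) = ‖x‖⁻¹ * x i := by
  have h1 : HasFDerivAt (fun y : E d => ‖y‖ ^ 2) _ x := (hasStrictFDerivAt_norm_sq x).hasFDerivAt
  have h2 : DifferentiableAt ℝ (fun y : E d => ‖y‖) x :=
    (contDiffAt_norm ℝ hx (n := 1)).differentiableAt (by simp)
  have h3 := (h2.hasFDerivAt.pow 2).unique h1
  have h4 := congrArg (fun L => L (EuclideanSpace.single i 1)) h3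
  simp [EuclideanSpace.inner_single_right] at h4
  have := norm_ne_zero_iff.2 hx
  field_simp
  linarith

lemma sphD_sphX (i j : Fin d) (σ : Sph d) :
    sphD i (sphX j) σ = (if i = j then 1 else 0) - sphX i σ * sphX j σ := by
  have h : homogExt (sphX j) = fun x : E d => ‖x‖⁻¹ * x j := funext (homogExt_sphX j)
  have hn : DifferentiableAt ℝ (fun y : E d => ‖y‖) (σ : E d) :=
    (contDiffAt_norm ℝ σ.ne_zero (n := 1)).differentiableAt (by simp)
  have hp : HasFDerivAt (fun x : E d => x j) (EuclideanSpace.proj (𝕜 := ℝ) j) (σ : E d) :=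
    (EuclideanSpace.proj (𝕜 := ℝ) j).hasFDerivAt
  have hi : HasFDerivAt (fun y : E d => ‖y‖⁻¹) _ (σ : E d) :=
    (hasDerivAt_inv (norm_ne_zero_iff.2 σ.ne_zero)).comp_hasFDerivAt _ hn.hasFDerivAt
  rw [sphD, h]
  change fderiv ℝ ((fun y : E d => ‖y‖⁻¹) * fun x : E d => x j) σ _ = _
  rw [(hi.mul hp).fderiv]
  simp [fderiv_norm_single σ.ne_zero, sphX, eq_comm (a := i)]
  split_ifs <;> ring

lemma sum_sphX_sq (σ : Sph d) : ∑ i, sphX i σ * sphX i σ = 1 := by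
  have h := EuclideanSpace.real_norm_sq_eq (σ : E d)
  rw [norm_eq_of_mem_sphere] at h
  simp only [sphX, ← sq, ← h, one_pow]

lemma sum_smul_single (v : E d) : ∑ i, v i • EuclideanSpace.single i (1 : ℝ) = v := by
  ext j
  simp [Finset.sum_apply, Pi.single_apply]

lemma fderiv_homogExt_apply (F : Sph d → ℝ) (σ : Sph d) (v : E d) :
    fderiv ℝ (homogExt F) (σ : E d) v = ∑ i, v i * sphD i F σ := by
  conv_lhs => rw [← sum_smul_single v]
  simp [sphD]

lemma sum_sphX_sphD {F : Sph d → ℝ} (hF : SphSmooth F) (σ : Sph d) :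
    ∑ i, sphX i σ * sphD i F σ = 0 := by
  have h := fderiv_homogExt_apply F σ σ
  rw [show ∑ i, sphX i σ * sphD i F σ = ∑ i, (σ : E d) i * sphD i F σ from rfl, ← h]
  have h1 : HasDerivAt (fun t : ℝ => t • (σ : E d)) (σ : E d) 1 := by
    simpa using (hasDerivAt_id (1 : ℝ)).smul_const (σ : E d)
  have h2 : HasDerivAt (fun t : ℝ => homogExt F (t • (σ : E d)))
      (fderiv ℝ (homogExt F) (σ : E d) σ) 1 := by
    have h3 : HasFDerivAt (homogExt F) (fderiv ℝ (homogExt F) (σ : E d)) ((1 : ℝ) • (σ : E d)) := by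
      rw [one_smul]
      exact (hF.differentiableAt σ.ne_zero).hasFDerivAt
    exact h3.comp_hasDerivAt 1 h1
  have h4 : (fun t : ℝ => homogExt F (t • (σ : E d))) =ᶠ[nhds 1] fun _ => F σ := by
    filter_upwards [lt_mem_nhds (zero_lt_one' ℝ)] with t ht
    rw [homogExt_smul F ht, homogExt_coe]
  exact (h2.congr_of_eventuallyEq h4.symm).unique (hasDerivAt_const _ _)

lemma sphD_sphD {F : Sph d → ℝ} (hF : SphSmooth F) (i j : Fin d) (σ : Sph d) :
    sphD i (sphD j F) σ = sphX i σ * sphD j F σ +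
      fderiv ℝ (fun y => fderiv ℝ (homogExt F) y (EuclideanSpace.single j 1)) (σ : E d)
        (EuclideanSpace.single i 1) := by
  have h : homogExt (sphD j F) =ᶠ[nhds (σ : E d)]
      fun x => ‖x‖ * fderiv ℝ (homogExt F) x (EuclideanSpace.single j 1) := by
    filter_upwards [isOpen_ne_zero.mem_nhds σ.ne_zero] with y hy using homogExt_sphD j F hy
  have hn : DifferentiableAt ℝ (fun y : E d => ‖y‖) (σ : E d) :=
    (contDiffAt_norm ℝ σ.ne_zero (n := 1)).differentiableAt (by simp)
  have hd : DifferentiableAt ℝ (fun y => fderiv ℝ (homogExt F) y (EuclideanSpace.single j 1))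
      (σ : E d) :=
    (((hF.contDiffAt σ.ne_zero).fderiv_right (m := 1)
      (WithTop.coe_le_coe.2 le_top)).differentiableAt (by simp)).clm_apply
      (differentiableAt_const _)
  rw [sphD, h.fderiv_eq, fderiv_fun_mul hn hd]
  simp [fderiv_norm_single σ.ne_zero, sphX, sphD]
  ring

lemma sphD_comm {F : Sph d → ℝ} (hF : SphSmooth F) (i j : Fin d) (σ : Sph d) :
    sphD j (sphD i F) σ = sphD i (sphD j F) σ + sphX j σ * sphD i F σ - sphX i σ * sphD j F σ := by
  rw [sphD_sphD hF, sphD_sphD hF]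
  have hd : DifferentiableAt ℝ (fderiv ℝ (homogExt F)) (σ : E d) :=
    ((hF.contDiffAt σ.ne_zero).fderiv_right (m := 1)
      (WithTop.coe_le_coe.2 le_top)).differentiableAt (by simp)
  have hs : IsSymmSndFDerivAt ℝ (homogExt F) (σ : E d) :=
    (hF.contDiffAt σ.ne_zero).isSymmSndFDerivAt (by simp; exact WithTop.coe_le_coe.2 le_top)
  have key (k : Fin d) (v : E d) :
      fderiv ℝ (fun y => fderiv ℝ (homogExt F) y (EuclideanSpace.single k 1)) (σ : E d) v
      = fderiv ℝ (fderiv ℝ (homogExt F)) (σ : E d) v (EuclideanSpace.single k 1) := by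
    rw [fderiv_clm_apply hd (differentiableAt_const _)]
    simp
  rw [key, key, hs.eq]
  ring

lemma sphLap_eq {F : Sph d → ℝ} (hF : SphSmooth F) (σ : Sph d) :
    sphLap F σ = ∑ i, sphD i (sphD i F) σ := by
  simp_rw [sphD_sphD hF, Finset.sum_add_distrib, sum_sphX_sphD hF, zero_add]
  rfl

lemma SphSmooth.sphLap_smooth {F : Sph d → ℝ} (hF : SphSmooth F) : SphSmooth (sphLap F) := by
  have h : sphLap F = fun σ => ∑ i, sphD i (sphD i F) σ := funext (sphLap_eq hF)
  rw [h]
  exact sphSmooth_sum _ fun i _ => (hF.sphD_smooth i).sphD_smooth i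

lemma norm_sphGrad_sq {F : Sph d → ℝ} (σ : Sph d) :
    ‖sphGrad F σ‖ ^ 2 = ∑ i, sphD i F σ * sphD i F σ := by
  rw [EuclideanSpace.real_norm_sq_eq]
  refine Finset.sum_congr rfl fun i _ => ?_
  have : (sphGrad F σ) i = sphD i F σ := by
    rw [sphD, ← inner_gradient_left, EuclideanSpace.inner_single_right]
    simp [sphGrad]
  rw [this, sq]

lemma SphSmooth.hasDerivAt_comp {F : Sph d → ℝ} (hF : SphSmooth F) {γ : ℝ → Sph d} {t : ℝ}
    {v : E d} (hγ : HasDerivAt (fun s => (γ s : E d)) v t) :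
    HasDerivAt (fun s => F (γ s)) (∑ i, v i * sphD i F (γ t)) t := by
  have h : (fun s => F (γ s)) = fun s => homogExt F (γ s : E d) := by ext; simp
  rw [h, ← fderiv_homogExt_apply]
  exact (hF.differentiableAt (γ t).ne_zero).hasFDerivAt.comp_hasDerivAt t hγ

end SphereCalculus

section Invariance

variable {d : ℕ}

/-- The isometry of the sphere induced by a linear isometry of the ambient space. -/
def sphIso (R : E d ≃ₗᵢ[ℝ] E d) : Sph d ≃ᵢ Sph d where
  toFun σ := ⟨R σ, by simp⟩
  invFun σ := ⟨R.symm σ, by simp⟩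
  left_inv σ := by ext1; simp
  right_inv σ := by ext1; simp
  isometry_toFun := by
    intro σ τ
    simp [Subtype.edist_eq]

@[simp] lemma sphIso_coe (R : E d ≃ₗᵢ[ℝ] E d) (σ : Sph d) : (sphIso R σ : E d) = R σ := rfl

/-- Invariance of a measure on the sphere under all linear isometries. -/
def RotInvariant (μ : Measure (Sph d)) : Prop :=
  ∀ R : E d ≃ₗᵢ[ℝ] E d, MeasurePreserving (sphIso R) μ μ

lemma rotInvariant_sphMeasure : RotInvariant (sphMeasure d) := fun R =>
  (sphIso R).measurePreserving_hausdorffMeasure _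

lemma RotInvariant.integral_comp {μ : Measure (Sph d)} (hμ : RotInvariant μ)
    (R : E d ≃ₗᵢ[ℝ] E d) (f : Sph d → ℝ) : ∫ σ, f (sphIso R σ) ∂μ = ∫ σ, f σ ∂μ :=
  (hμ R).integral_comp (sphIso R).toHomeomorph.measurableEmbedding f

lemma exists_sphIso_eq (σ τ : Sph d) : ∃ R : E d ≃ₗᵢ[ℝ] E d, sphIso R σ = τ := by
  refine ⟨(ℝ ∙ ((σ : E d) - τ))ᗮ.reflection, ?_⟩
  ext1
  rw [sphIso_coe]
  exact Submodule.reflection_sub (by simp)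

lemma Continuous.integrable_sph {μ : Measure (Sph d)} [IsFiniteMeasure μ] {f : Sph d → ℝ}
    (hf : Continuous f) : Integrable f μ :=
  hf.integrable_of_hasCompactSupport (HasCompactSupport.of_compactSpace f)

lemma Continuous.exists_abs_le_sph {f : Sph d → ℝ} (hf : Continuous f) :
    ∃ C, ∀ σ, |f σ| ≤ C := by
  obtain ⟨C, hC⟩ := isCompact_univ.exists_bound_of_continuousOn hf.continuousOn
  exact ⟨C, fun σ => hC σ trivial⟩

/-- The linear map rotating the coordinate plane `(i, j)`. -/
def planeRotLin (i j : Fin d) (θ : ℝ) : E d →ₗ[ℝ] E d where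
  toFun x := x + (((Real.cos θ - 1) * x i - Real.sin θ * x j) • EuclideanSpace.single i (1 : ℝ)
    + (Real.sin θ * x i + (Real.cos θ - 1) * x j) • EuclideanSpace.single j (1 : ℝ))
  map_add' x y := by
    simp only [PiLp.add_apply]
    module
  map_smul' c x := by
    simp only [PiLp.smul_apply, smul_eq_mul, RingHom.id_apply]
    module

lemma planeRotLin_apply (i j : Fin d) (θ : ℝ) (x : E d) :
    planeRotLin i j θ x =
      x + (((Real.cos θ - 1) * x i - Real.sin θ * x j) • EuclideanSpace.single i (1 : ℝ)
    + (Real.sin θ * x i + (Real.cos θ - 1) * x j) • EuclideanSpace.single j (1 : ℝ)) := rfl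

lemma norm_planeRotLin {i j : Fin d} (hij : i ≠ j) (θ : ℝ) (x : E d) :
    ‖planeRotLin i j θ x‖ = ‖x‖ := by
  rw [← sq_eq_sq₀ (norm_nonneg _) (norm_nonneg _), planeRotLin_apply]
  set a := (Real.cos θ - 1) * x i - Real.sin θ * x j with ha
  set b := Real.sin θ * x i + (Real.cos θ - 1) * x j with hb
  rw [norm_add_sq_real, norm_add_sq_real]
  simp only [inner_add_right, inner_smul_right, inner_smul_left, EuclideanSpace.inner_single_right,
    norm_smul, PiLp.norm_single, PiLp.single_apply, norm_one, mul_one, Real.norm_eq_abs,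
    sq_abs, if_neg hij.symm]
  simp only [conj_trivial, one_mul, mul_zero, add_zero]
  have := Real.sin_sq_add_cos_sq θ
  rw [ha, hb]
  linear_combination (x.ofLp i ^ 2 + x.ofLp j ^ 2) * this

/-- Rotation of the coordinate plane `(i, j)`, as a linear isometry. -/
def planeRot {i j : Fin d} (hij : i ≠ j) (θ : ℝ) : E d ≃ₗᵢ[ℝ] E d :=
  LinearIsometry.toLinearIsometryEquiv ⟨planeRotLin i j θ, norm_planeRotLin hij θ⟩ rfl

lemma planeRot_apply {i j : Fin d} (hij : i ≠ j) (θ : ℝ) (x : E d) :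
    planeRot hij θ x = planeRotLin i j θ x := rfl

lemma hasDerivAt_planeRot {F : Sph d → ℝ} (hF : SphSmooth F) {i j : Fin d} (hij : i ≠ j)
    (σ : Sph d) (θ : ℝ) :
    HasDerivAt (fun s => F (sphIso (planeRot hij s) σ))
      (sphX i (sphIso (planeRot hij θ) σ) * sphD j F (sphIso (planeRot hij θ) σ)
        - sphX j (sphIso (planeRot hij θ) σ) * sphD i F (sphIso (planeRot hij θ) σ)) θ := by
  let x : E d := σ.1
  have h1 : HasDerivAt (fun s => ((sphIso (planeRot hij s) σ : Sph d) : E d))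
      ((-(Real.sin θ * x i + Real.cos θ * x j)) • EuclideanSpace.single i (1 : ℝ)
        + (Real.cos θ * x i - Real.sin θ * x j) • EuclideanSpace.single j (1 : ℝ)) θ := by
    simp only [sphIso_coe, planeRot_apply, planeRotLin_apply]
    refine HasDerivAt.const_add _ (HasDerivAt.add (HasDerivAt.smul_const ?_ _)
      (HasDerivAt.smul_const ?_ _))
    · refine HasDerivAt.congr_deriv ((((Real.hasDerivAt_cos θ).sub_const 1).mul_const (x i)).sub
        ((Real.hasDerivAt_sin θ).mul_const (x j))) ?_
      ring
    · refine HasDerivAt.congr_deriv (((Real.hasDerivAt_sin θ).mul_const (x i)).add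
        (((Real.hasDerivAt_cos θ).sub_const 1).mul_const (x j))) ?_
      ring
  convert hF.hasDerivAt_comp h1 using 1
  have hi : sphX i (sphIso (planeRot hij θ) σ) = Real.cos θ * x i - Real.sin θ * x j := by
    simp [sphX, planeRot_apply, planeRotLin_apply, hij]
    ring
  have hj : sphX j (sphIso (planeRot hij θ) σ) = Real.sin θ * x i + Real.cos θ * x j := by
    simp [sphX, planeRot_apply, planeRotLin_apply, hij.symm]
    ring
  rw [hi, hj]
  simp [add_mul, Finset.sum_add_distrib]
  ring

lemma RotInvariant.integral_rotField {μ : Measure (Sph d)} [IsFiniteMeasure μ]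
    (hμ : RotInvariant μ) {F : Sph d → ℝ} (hF : SphSmooth F) (i j : Fin d) :
    ∫ σ, (sphX i σ * sphD j F σ - sphX j σ * sphD i F σ) ∂μ = 0 := by
  by_cases hij : i = j
  · subst hij; simp
  set L : Sph d → ℝ := fun σ => sphX i σ * sphD j F σ - sphX j σ * sphD i F σ with hL
  have hLc : Continuous L :=
    (((sphSmooth_sphX i).mul (hF.sphD_smooth j)).sub
      ((sphSmooth_sphX j).mul (hF.sphD_smooth i))).continuous
  obtain ⟨C, hC⟩ := hLc.exists_abs_le_sph
  have h := (hasDerivAt_integral_of_dominated_loc_of_deriv_le (μ := μ) (s := Set.univ)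
    (F := fun θ σ => F (sphIso (planeRot hij θ) σ))
    (F' := fun θ σ => L (sphIso (planeRot hij θ) σ)) (x₀ := 0) (bound := fun _ => C)
    Filter.univ_mem
    (.of_forall fun θ => (hF.continuous.comp (sphIso _).continuous).aestronglyMeasurable)
    (hF.continuous.comp (sphIso _).continuous).integrable_sph
    (hLc.comp (sphIso _).continuous).aestronglyMeasurable
    (.of_forall fun σ θ _ => hC _) (integrable_const C)
    (.of_forall fun σ θ _ => hasDerivAt_planeRot hF hij σ θ)).2
  simp only [hμ.integral_comp] at h
  exact h.unique (hasDerivAt_const _ _)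

lemma RotInvariant.integral_sphD {μ : Measure (Sph d)} [IsFiniteMeasure μ]
    (hμ : RotInvariant μ) {F : Sph d → ℝ} (hF : SphSmooth F) (i : Fin d) :
    ∫ σ, sphD i F σ ∂μ = ((d : ℝ) - 1) * ∫ σ, sphX i σ * F σ ∂μ := by
  have key : ∀ σ, sphD i F σ = ((d : ℝ) - 1) * (sphX i σ * F σ) +
      ∑ j, (sphX j σ * sphD i (fun τ => sphX j τ * F τ) σ
        - sphX i σ * sphD j (fun τ => sphX j τ * F τ) σ) := by
    intro σ
    have h1 := sum_sphX_sq σ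
    have h2 := sum_sphX_sphD hF σ
    have h3 : ∀ j, (sphX j σ * sphD i (fun τ => sphX j τ * F τ) σ
        - sphX i σ * sphD j (fun τ => sphX j τ * F τ) σ) =
        (sphX j σ * sphX j σ) * sphD i F σ - sphX i σ * (sphX j σ * sphD j F σ)
        + (if i = j then sphX j σ * F σ else 0) - sphX i σ * F σ := by
      intro j
      rw [sphD_mul (sphSmooth_sphX j) hF, sphD_mul (sphSmooth_sphX j) hF, sphD_sphX, sphD_sphX]
      by_cases h : i = j
      · subst h; simp; ring
      · simp [h]; ring
    simp_rw [h3, Finset.sum_sub_distrib, Finset.sum_add_distrib, Finset.sum_sub_distrib,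
      ← Finset.sum_mul, ← Finset.mul_sum, h1, h2]
    simp
    ring
  have hX (j : Fin d) : SphSmooth (fun τ => sphX j τ * F τ) := (sphSmooth_sphX j).mul hF
  have hI (j : Fin d) : Integrable (fun σ => sphX j σ * sphD i (fun τ => sphX j τ * F τ) σ
        - sphX i σ * sphD j (fun τ => sphX j τ * F τ) σ) μ :=
    (((sphSmooth_sphX j).mul ((hX j).sphD_smooth i)).sub
      ((sphSmooth_sphX i).mul ((hX j).sphD_smooth j))).continuous.integrable_sph
  simp_rw [key]
  rw [integral_add ((hX i).const_mul _).continuous.integrable_sph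
    (integrable_finsetSum _ fun j _ => hI j), integral_finsetSum _ fun j _ => hI j,
    integral_const_mul]
  simp [hμ.integral_rotField (hX _)]

/-- Green's formula on the sphere. -/
lemma RotInvariant.integral_mul_sphLap {μ : Measure (Sph d)} [IsFiniteMeasure μ]
    (hμ : RotInvariant μ) {F G : Sph d → ℝ} (hF : SphSmooth F) (hG : SphSmooth G) :
    ∫ σ, F σ * sphLap G σ ∂μ = -∫ σ, ∑ i, sphD i F σ * sphD i G σ ∂μ := by
  have hs (i : Fin d) : SphSmooth (fun τ => F τ * sphD i G τ) := hF.mul (hG.sphD_smooth i)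
  have h1 : ∫ σ, ∑ i, sphD i (fun τ => F τ * sphD i G τ) σ ∂μ = 0 := by
    rw [integral_finsetSum _ fun i _ => ((hs i).sphD_smooth i).continuous.integrable_sph]
    simp_rw [hμ.integral_sphD (hs _)]
    rw [← Finset.mul_sum, ← integral_finsetSum _ fun i _ =>
      ((sphSmooth_sphX i).mul (hs i)).continuous.integrable_sph]
    have : ∀ σ, ∑ i, sphX i σ * (F σ * sphD i G σ) = 0 := by
      intro σ
      have := sum_sphX_sphD hG σ
      calc _ = F σ * ∑ i, sphX i σ * sphD i G σ := by
            rw [Finset.mul_sum]; exact Finset.sum_congr rfl fun i _ => by ring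
        _ = 0 := by rw [this, mul_zero]
    simp [this]
  have h2 : ∀ σ, ∑ i, sphD i (fun τ => F τ * sphD i G τ) σ
      = F σ * sphLap G σ + ∑ i, sphD i F σ * sphD i G σ := by
    intro σ
    rw [sphLap_eq hG, Finset.mul_sum, ← Finset.sum_add_distrib]
    refine Finset.sum_congr rfl fun i _ => ?_
    rw [sphD_mul hF (hG.sphD_smooth i)]
    ring
  simp_rw [h2] at h1
  rw [integral_add (hF.mul hG.sphLap_smooth).continuous.integrable_sph
    (sphSmooth_sum _ fun i _ => (hF.sphD_smooth i).mul
      (hG.sphD_smooth i)).continuous.integrable_sph] at h1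
  linarith

end Invariance

section Finiteness

/-- Parametrization of a face of the cube, projected radially to the sphere. -/
def cubeFace {n : ℕ} (i : Fin (n + 1)) (s : ℝ) (y : Fin n → ℝ) : E (n + 1) :=
  WithLp.toLp 2 (Fin.insertNth i s y)

lemma cubeFace_ne_zero {n : ℕ} (i : Fin (n + 1)) {s : ℝ} (hs : s ≠ 0) (y : Fin n → ℝ) :
    cubeFace i s y ≠ 0 := by
  intro h
  have := congrArg (fun v : E (n + 1) => v i) h
  simp [cubeFace] at this
  exact hs this

lemma contDiff_cubeFace {n : ℕ} (i : Fin (n + 1)) (s : ℝ) : ContDiff ℝ 1 (cubeFace i s) := by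
  rw [contDiff_euclidean]
  intro k
  refine Fin.succAboveCases i ?_ (fun j => ?_) k
  · simpa [cubeFace] using contDiff_const
  · simpa [cubeFace] using contDiff_apply ℝ ℝ j

lemma hausdorffMeasure_cubeFace_lt_top {n : ℕ} (i : Fin (n + 1)) {s : ℝ} (hs : s ≠ 0) :
    (μH[(n : ℝ)] : Measure (Sph (n + 1)))
      ((fun y => sphProj (cubeFace i s y) (cubeFace_ne_zero i hs y)) ''
        Set.Icc (fun _ => -1) (fun _ => 1)) < ⊤ := by
  have hsm : ContDiff ℝ 1 (fun y : Fin n → ℝ => ‖cubeFace i s y‖⁻¹ • cubeFace i s y) := by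
    refine ContDiff.smul (ContDiff.inv ?_ fun y => norm_ne_zero_iff.2 (cubeFace_ne_zero i hs y))
      (contDiff_cubeFace i s)
    exact (contDiff_cubeFace i s).norm ℝ fun y => cubeFace_ne_zero i hs y
  obtain ⟨K, hK⟩ := (hsm.locallyLipschitz.locallyLipschitzOn
    (s := Set.Icc (fun _ => -1) (fun _ => 1))).exists_lipschitzOnWith_of_compact isCompact_Icc
  have hK' : LipschitzOnWith K
      (fun y => sphProj (cubeFace i s y) (cubeFace_ne_zero i hs y))
      (Set.Icc (fun _ => -1) (fun _ => 1)) := fun x hx y hy => hK hx hy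
  refine (hK'.hausdorffMeasure_image_le (Nat.cast_nonneg n)).trans_lt ?_
  refine ENNReal.mul_lt_top (ENNReal.rpow_lt_top_of_nonneg (Nat.cast_nonneg n) (by simp)) ?_
  have : (μH[(n : ℝ)] : Measure (Fin n → ℝ)) = volume := by
    simpa using hausdorffMeasure_pi_real (ι := Fin n)
  rw [this]
  exact isCompact_Icc.measure_lt_top

lemma isFiniteMeasure_sphMeasure {d : ℕ} (hd : 1 ≤ d) : IsFiniteMeasure (sphMeasure d) := by
  obtain ⟨n, rfl⟩ : ∃ n, d = n + 1 := ⟨d - 1, by omega⟩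
  constructor
  have hcov : (Set.univ : Set (Sph (n + 1))) ⊆
      (⋃ i : Fin (n + 1), (fun y => sphProj (cubeFace i 1 y) (cubeFace_ne_zero i one_ne_zero y)) ''
        Set.Icc (fun _ => -1) (fun _ => 1)) ∪
      (⋃ i : Fin (n + 1), (fun y => sphProj (cubeFace i (-1) y)
        (cubeFace_ne_zero i (by norm_num) y)) '' Set.Icc (fun _ => -1) (fun _ => 1)) := by
    intro σ _
    obtain ⟨i, hi⟩ := Finite.exists_max fun i => |(σ : E (n + 1)) i|
    have hpos : 0 < |(σ : E (n + 1)) i| := by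
      by_contra h
      refine σ.ne_zero ?_
      ext k
      have := (hi k).trans (not_lt.1 h)
      simpa using this
    have hmem (c : ℝ) (hc : |c| = |(σ : E (n + 1)) i|) :
        (fun k => c⁻¹ * (σ : E (n + 1)) (i.succAbove k)) ∈
          Set.Icc (fun _ : Fin n => (-1 : ℝ)) (fun _ => 1) := by
      have (k : Fin n) : |c⁻¹ * (σ : E (n + 1)) (i.succAbove k)| ≤ 1 := by
        rw [abs_mul, abs_inv, hc, inv_mul_le_iff₀ hpos, mul_one]
        exact hi _
      exact ⟨fun k => (abs_le.1 (this k)).1, fun k => (abs_le.1 (this k)).2⟩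
    have hproj (c s : ℝ) (hs : s ≠ 0) (hc : 0 < c) (hcs : c * s = (σ : E (n + 1)) i) :
        sphProj (cubeFace i s fun k => c⁻¹ * (σ : E (n + 1)) (i.succAbove k))
          (cubeFace_ne_zero i hs _) = σ := by
      rw [← sphProj_smul hc]
      have : c • cubeFace i s (fun k => c⁻¹ * (σ : E (n + 1)) (i.succAbove k)) = σ := by
        ext k
        refine Fin.succAboveCases i ?_ (fun j => ?_) k
        · simp [cubeFace, hcs]
        · simp [cubeFace, hc.ne']
      simp_rw [this, sphProj_coe]
    rcases lt_or_gt_of_ne (abs_pos.1 hpos) with h | h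
    · right
      refine Set.mem_iUnion.2 ⟨i, _, hmem (-(σ : E (n + 1)) i) (abs_neg _),
        hproj _ _ (by norm_num) (by linarith) (by ring)⟩
    · left
      refine Set.mem_iUnion.2 ⟨i, _, hmem ((σ : E (n + 1)) i) rfl,
        hproj _ _ (by norm_num) h (by ring)⟩
  have hdim : (((n + 1 : ℕ) : ℝ) - 1) = n := by push_cast; ring
  rw [sphMeasure, hdim]
  refine (measure_mono hcov).trans_lt ((measure_union_le _ _).trans_lt (ENNReal.add_lt_top.2 ⟨?_, ?_⟩))
  all_goals
    refine (measure_iUnion_fintype_le _ _).trans_lt (ENNReal.sum_lt_top.2 fun i _ => ?_)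
    exact hausdorffMeasure_cubeFace_lt_top i (by norm_num)

end Finiteness

section Wirtinger

open Real

lemma wirtinger_of_zero {h h' : ℝ → ℝ} (hd : ∀ x, HasDerivAt h (h' x) x) (hc : Continuous h')
    (h0 : h 0 = 0) (hpi : h π = 0) : 0 ≤ ∫ x in (0 : ℝ)..π, (h' x ^ 2 - h x ^ 2) := by
  have hch : Continuous h := continuous_iff_continuousAt.2 fun x => (hd x).continuousAt
  set φ : ℝ → ℝ := fun x => h' x ^ 2 - h x ^ 2 with hφ
  have hφc : Continuous φ := by fun_prop
  obtain ⟨M, hM⟩ := (isCompact_Icc (a := (0 : ℝ)) (b := π)).exists_bound_of_continuousOn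
    hc.continuousOn
  have hlip : ∀ x ∈ Set.Icc (0 : ℝ) π, ∀ y ∈ Set.Icc (0 : ℝ) π, |h y - h x| ≤ M * |y - x| :=
    fun x hx y hy => (convex_Icc (0 : ℝ) π).norm_image_sub_le_of_norm_hasDerivWithin_le
      (fun z _ => (hd z).hasDerivWithinAt) hM hx hy
  have hpi0 := pi_pos
  have hlow : ∀ ε ∈ Set.Ioo (0 : ℝ) (π / 2), -(2 * M ^ 2 * ε) ≤ ∫ x in ε..(π - ε), φ x := by
    intro ε hε
    have hsin : ∀ x ∈ Set.Icc ε (π - ε), sin x ≠ 0 := fun x hx =>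
      (sin_pos_of_pos_of_lt_pi (by linarith [hx.1, hε.1]) (by linarith [hx.2, hε.1])).ne'
    have hg : ∀ x ∈ Set.Icc ε (π - ε), HasDerivAt (fun x => h x ^ 2 * (cos x / sin x))
        (2 * h x * h' x * (cos x / sin x) + h x ^ 2 * (-1 - (cos x / sin x) ^ 2)) x := by
      intro x hx
      refine (((hd x).pow 2).mul ((hasDerivAt_cos x).div (hasDerivAt_sin x)
        (hsin x hx))).congr_deriv ?_
      have := hsin x hx
      simp only [Pi.pow_apply, Pi.div_apply, Nat.cast_ofNat, Nat.add_one_sub_one, pow_one]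
      field_simp
    have key := intervalIntegral.sub_le_integral_of_hasDeriv_right_of_le
      (g := fun x => h x ^ 2 * (cos x / sin x)) (φ := φ) (a := ε) (b := π - ε)
      (by linarith [hε.2]) (fun x hx => (hg x hx).continuousAt.continuousWithinAt)
      (fun x hx => (hg x (Set.Ioo_subset_Icc_self hx)).hasDerivWithinAt)
      hφc.integrableOn_Icc
      (fun x _ => by
        simp only [hφ]
        nlinarith [sq_nonneg (h' x - h x * (cos x / sin x))])
    refine le_trans ?_ key
    have hs : 0 < sin ε := sin_pos_of_pos_of_lt_pi hε.1 (by linarith [hε.2])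
    have hco : 0 < cos ε := cos_pos_of_mem_Ioo ⟨by linarith [hε.1], hε.2⟩
    have hcot : cos ε / sin ε ≤ ε⁻¹ := by
      have := lt_tan hε.1 hε.2
      rw [tan_eq_sin_div_cos, lt_div_iff₀ hco] at this
      rw [div_le_iff₀ hs, inv_mul_eq_div, le_div_iff₀ hε.1]
      linarith
    have b1 : h ε ^ 2 ≤ (M * ε) ^ 2 := by
      have := hlip 0 ⟨le_rfl, hpi0.le⟩ ε ⟨hε.1.le, by linarith [hε.2]⟩
      rw [h0, sub_zero, sub_zero, abs_of_pos hε.1] at this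
      exact sq_le_sq' (abs_le.1 this).1 (abs_le.1 this).2
    have b2 : h (π - ε) ^ 2 ≤ (M * ε) ^ 2 := by
      have := hlip π ⟨hpi0.le, le_rfl⟩ (π - ε) ⟨by linarith [hε.2], by linarith [hε.1]⟩
      rw [hpi, sub_zero, show π - ε - π = -ε by ring, abs_neg, abs_of_pos hε.1] at this
      exact sq_le_sq' (abs_le.1 this).1 (abs_le.1 this).2
    simp only [cos_pi_sub, sin_pi_sub, neg_div]
    have hcot0 : 0 ≤ cos ε / sin ε := (div_pos hco hs).le
    have b3 : (h ε ^ 2 + h (π - ε) ^ 2) * (cos ε / sin ε) ≤ (2 * (M * ε) ^ 2) * ε⁻¹ :=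
      mul_le_mul (by linarith) hcot hcot0 (by positivity)
    have b4 : (2 * (M * ε) ^ 2) * ε⁻¹ = 2 * M ^ 2 * ε := by
      have := hε.1.ne'
      field_simp
    linarith
  have hcont : Continuous fun ε : ℝ => ∫ x in ε..(π - ε), φ x := by
    have : (fun ε : ℝ => ∫ x in ε..(π - ε), φ x) =
        fun ε => (∫ x in (0 : ℝ)..(π - ε), φ x) - ∫ x in (0 : ℝ)..ε, φ x := by
      ext ε
      rw [intervalIntegral.integral_interval_sub_left (hφc.intervalIntegrable _ _)
        (hφc.intervalIntegrable _ _)]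
    rw [this]
    have hp : Continuous fun b : ℝ => ∫ x in (0 : ℝ)..b, φ x :=
      intervalIntegral.continuous_primitive (fun a b => hφc.intervalIntegrable a b) 0
    exact (hp.comp (by fun_prop)).sub hp
  have t1 := (hcont.tendsto 0).mono_left (nhdsWithin_le_nhds (s := Set.Ioi 0))
  have t2 : Filter.Tendsto (fun ε : ℝ => -(2 * M ^ 2 * ε)) (nhdsWithin 0 (Set.Ioi 0)) (nhds 0) := by
    have : Continuous fun ε : ℝ => -(2 * M ^ 2 * ε) := by fun_prop
    simpa using (this.tendsto 0).mono_left (nhdsWithin_le_nhds (s := Set.Ioi 0))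
  have := le_of_tendsto_of_tendsto t2 t1 (by
    filter_upwards [Ioo_mem_nhdsGT (show (0 : ℝ) < π / 2 by positivity)] with ε hε using hlow ε hε)
  simpa using this

/-- Wirtinger's inequality for antiperiodic functions. -/
lemma wirtinger_antiperiodic {h h' : ℝ → ℝ} (hd : ∀ x, HasDerivAt h (h' x) x)
    (hc : Continuous h') (hanti : Function.Antiperiodic h π) :
    ∫ x in (0 : ℝ)..π, h x ^ 2 ≤ ∫ x in (0 : ℝ)..π, h' x ^ 2 := by
  have hch : Continuous h := continuous_iff_continuousAt.2 fun x => (hd x).continuousAt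
  have hanti' : Function.Antiperiodic h' π := by
    intro x
    have h1 : HasDerivAt (fun y => h (y + π)) (h' (x + π)) x := (hd (x + π)).comp_add_const x π
    have h2 : (fun y => h (y + π)) = fun y => -h y := funext hanti
    rw [h2] at h1
    exact h1.unique (hd x).neg
  obtain ⟨a, ha⟩ : ∃ a, h a = 0 := by
    have hpi : h π = -h 0 := by simpa using hanti 0
    have hiv := intermediate_value_uIcc (hch.continuousOn (s := Set.uIcc 0 π))
    have : (0 : ℝ) ∈ Set.uIcc (h 0) (h π) := by
      rw [hpi, Set.mem_uIcc]
      rcases le_total (h 0) 0 with h | h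
      · left; exact ⟨h, by linarith⟩
      · right; exact ⟨by linarith, h⟩
    obtain ⟨a, -, ha⟩ := hiv this
    exact ⟨a, ha⟩
  have hper : Function.Periodic (fun x => h' x ^ 2 - h x ^ 2) π := by
    intro x
    simp only [hanti x, hanti' x, neg_sq]
  have key := wirtinger_of_zero (h := fun x => h (x + a)) (h' := fun x => h' (x + a))
    (fun x => (hd (x + a)).comp_add_const x a) (by fun_prop) (by simpa using ha)
    (by rw [add_comm, hanti a, ha, neg_zero])
  rw [intervalIntegral.integral_comp_add_right (fun x => h' x ^ 2 - h x ^ 2), zero_add,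
    add_comm π a, hper.intervalIntegral_add_eq a 0, zero_add,
    intervalIntegral.integral_sub (Continuous.intervalIntegrable (by fun_prop) _ _)
      (Continuous.intervalIntegrable (by fun_prop) _ _)] at key
  linarith

end Wirtinger

section OrthogonalGroup

variable {d : ℕ}

/-- The orthogonal group of `ℝ^d`, with its operator norm topology. -/
abbrev OGrp (d : ℕ) : Type := unitary (E d →L[ℝ] E d)

instance : ContinuousStar (E d →L[ℝ] E d) :=
  ⟨(ContinuousLinearMap.adjoint (𝕜 := ℝ) (E := E d) (F := E d)).continuous⟩

instance : CompactSpace (OGrp d) := by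
  have : ProperSpace (E d →L[ℝ] E d) := FiniteDimensional.proper ℝ _
  refine isCompact_iff_compactSpace.1 (Metric.isCompact_of_isClosed_isBounded isClosed_unitary ?_)
  refine (Metric.isBounded_closedBall (x := (0 : E d →L[ℝ] E d)) (r := 1)).subset fun A hA => ?_
  rw [mem_closedBall_zero_iff]
  refine A.opNorm_le_bound zero_le_one fun x => ?_
  rw [one_mul]
  exact ((Unitary.linearIsometryEquiv ⟨A, hA⟩).norm_map x).le

instance : SecondCountableTopology (OGrp d) := by
  have : ProperSpace (E d →L[ℝ] E d) := FiniteDimensional.proper ℝ _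
  infer_instance

/-- The action of the orthogonal group on the sphere. -/
def sphAct (A : OGrp d) (σ : Sph d) : Sph d := sphIso (Unitary.linearIsometryEquiv A) σ

@[simp] lemma sphAct_coe (A : OGrp d) (σ : Sph d) :
    (sphAct A σ : E d) = (A : E d →L[ℝ] E d) σ := rfl

lemma sphAct_mul (A B : OGrp d) (σ : Sph d) : sphAct (A * B) σ = sphAct A (sphAct B σ) := rfl

lemma continuous_sphAct : Continuous fun p : OGrp d × Sph d => sphAct p.1 p.2 := by
  rw [continuous_induced_rng]
  change Continuous fun p : OGrp d × Sph d => (p.1 : E d →L[ℝ] E d) (p.2 : E d)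
  fun_prop

/-- A right invariant finite measure on the orthogonal group. -/
def oMeasure (d : ℕ) : Measure (OGrp d) := (Measure.haar : Measure (OGrp d)).inv

instance : IsFiniteMeasure (oMeasure d) := by unfold oMeasure Measure.inv; infer_instance

instance : (oMeasure d).IsMulRightInvariant := by unfold oMeasure; infer_instance

lemma oMeasure_univ_pos : 0 < (oMeasure d).real Set.univ := by
  refine ENNReal.toReal_pos ?_ (measure_ne_top _ _)
  rw [oMeasure, Measure.inv_apply, Set.inv_univ]
  exact (isOpen_univ.measure_pos _ Set.univ_nonempty).ne'

lemma Continuous.integrable_oGrp {f : OGrp d → ℝ} (hf : Continuous f) :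
    Integrable f (oMeasure d) :=
  hf.integrable_of_hasCompactSupport (HasCompactSupport.of_compactSpace f)

/-- Averaging over a rotation invariant measure is averaging over the orthogonal group. -/
lemma RotInvariant.integral_eq_oMeasure {μ : Measure (Sph d)} [IsFiniteMeasure μ]
    (hμ : RotInvariant μ) {f : Sph d → ℝ} (hf : Continuous f) (e : Sph d) :
    (oMeasure d).real Set.univ * ∫ σ, f σ ∂μ =
      μ.real Set.univ * ∫ A, f (sphAct A e) ∂oMeasure d := by
  have hc : Continuous fun p : OGrp d × Sph d => f (sphAct p.1 p.2) := hf.comp continuous_sphAct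
  have h1 (A : OGrp d) : ∫ σ, f (sphAct A σ) ∂μ = ∫ σ, f σ ∂μ := hμ.integral_comp _ f
  have h2 (σ : Sph d) : ∫ A, f (sphAct A σ) ∂oMeasure d = ∫ A, f (sphAct A e) ∂oMeasure d := by
    obtain ⟨R, hR⟩ := exists_sphIso_eq e σ
    rw [← integral_mul_right_eq_self (fun A => f (sphAct A e)) (Unitary.linearIsometryEquiv.symm R)]
    refine integral_congr_ae (.of_forall fun A => ?_)
    simp only [sphAct_mul]
    congr 2
    rw [← hR]
    ext1
    simp
  have h3 := integral_integral_swap (μ := oMeasure d) (ν := μ) (f := fun A σ => f (sphAct A σ))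
    (hc.integrable_of_hasCompactSupport (HasCompactSupport.of_compactSpace _))
  simpa [h1, h2] using h3

/-- Rotations of a coordinate plane, as elements of the orthogonal group. -/
def oRot {i j : Fin d} (hij : i ≠ j) (θ : ℝ) : OGrp d :=
  Unitary.linearIsometryEquiv.symm (planeRot hij θ)

lemma oRot_apply {i j : Fin d} (hij : i ≠ j) (θ : ℝ) (x : E d) :
    (oRot hij θ : E d →L[ℝ] E d) x = planeRotLin i j θ x := by
  simp [oRot, planeRot_apply]

lemma continuous_oRot {i j : Fin d} (hij : i ≠ j) : Continuous (oRot hij) := by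
  rw [continuous_induced_rng, continuous_clm_apply]
  intro x
  simp only [Function.comp_apply, oRot_apply, planeRotLin_apply]
  fun_prop

lemma integral_integral_oRot {f : OGrp d → ℝ} (hf : Continuous f) {i j : Fin d} (hij : i ≠ j) :
    ∫ A, (∫ θ in (0 : ℝ)..Real.pi, f (A * oRot hij θ)) ∂oMeasure d =
      Real.pi * ∫ A, f A ∂oMeasure d := by
  have hc : Continuous fun p : OGrp d × ℝ => f (p.1 * oRot hij p.2) :=
    hf.comp (continuous_fst.mul ((continuous_oRot hij).comp continuous_snd))
  obtain ⟨C, hC⟩ := isCompact_univ.exists_bound_of_continuousOn hf.continuousOn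
  simp only [intervalIntegral.integral_of_le Real.pi_pos.le]
  rw [integral_integral_swap (Integrable.of_bound hc.aestronglyMeasurable C
    (.of_forall fun p => hC _ trivial))]
  simp [integral_mul_right_eq_self f, Real.pi_pos.le]

end OrthogonalGroup

section Poincare

variable {d : ℕ}

/-- The `i`-th vector of the standard basis, as a point of the sphere. -/
def sphBasis (i : Fin d) : Sph d := ⟨EuclideanSpace.single i 1, by simp⟩

@[simp] lemma sphBasis_coe (i : Fin d) : (sphBasis i : E d) = EuclideanSpace.single i 1 := rfl

/-- The components, in the frame given by `A`, of the gradient of `V` at the image of a basis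
vector. -/
def frameD (V : Sph d → ℝ) (i j : Fin d) (A : OGrp d) : ℝ :=
  ∑ k, ((A : E d →L[ℝ] E d) (EuclideanSpace.single j 1)) k * sphD k V (sphAct A (sphBasis i))

lemma continuous_sphAct_left (e : Sph d) : Continuous fun A : OGrp d => sphAct A e :=
  continuous_sphAct.comp (continuous_id.prodMk continuous_const)

lemma continuous_frameD {V : Sph d → ℝ} (hV : SphSmooth V) (i j : Fin d) :
    Continuous (frameD V i j) := by
  refine continuous_finsetSum _ fun k _ => ?_
  have := ((hV.sphD_smooth k).continuous.comp (continuous_sphAct_left (sphBasis i)))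
  have h2 : Continuous fun A : OGrp d => (A : E d →L[ℝ] E d) (EuclideanSpace.single j 1) := by
    fun_prop
  exact Continuous.mul (by fun_prop) this

lemma sum_frameD_sq (V : Sph d → ℝ) (i : Fin d) (A : OGrp d) :
    ∑ j, frameD V i j A ^ 2 =
      ∑ k, sphD k V (sphAct A (sphBasis i)) * sphD k V (sphAct A (sphBasis i)) := by
  set W : E d := WithLp.toLp 2 fun k => sphD k V (sphAct A (sphBasis i)) with hW
  have h1 (j : Fin d) : frameD V i j A =
      ⟪((EuclideanSpace.basisFun (Fin d) ℝ).map (Unitary.linearIsometryEquiv A)) j, W⟫ := by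
    rw [OrthonormalBasis.map_apply, PiLp.inner_apply, frameD]
    refine Finset.sum_congr rfl fun k _ => ?_
    simp only [hW, EuclideanSpace.basisFun_apply, RCLike.inner_apply, conj_trivial]
    rw [mul_comm]
    rfl
  simp_rw [h1]
  have h2 := OrthonormalBasis.sum_sq_norm_inner_right
    ((EuclideanSpace.basisFun (Fin d) ℝ).map (Unitary.linearIsometryEquiv A)) W
  simp only [Real.norm_eq_abs, sq_abs] at h2
  rw [h2, EuclideanSpace.real_norm_sq_eq]
  exact Finset.sum_congr rfl fun k _ => by simp [hW, sq]

lemma frameD_self {V : Sph d → ℝ} (hV : SphSmooth V) (i : Fin d) (A : OGrp d) :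
    frameD V i i A = 0 :=
  sum_sphX_sphD hV (sphAct A (sphBasis i))

lemma integral_sq_le_frameD {V : Sph d → ℝ} (hV : SphSmooth V) (hodd : ∀ σ, V (-σ) = -V σ)
    {i j : Fin d} (hij : i ≠ j) :
    ∫ A, V (sphAct A (sphBasis i)) ^ 2 ∂oMeasure d ≤ ∫ A, frameD V i j A ^ 2 ∂oMeasure d := by
  have rot1 (θ : ℝ) : planeRotLin i j θ (EuclideanSpace.single i 1) =
      Real.cos θ • EuclideanSpace.single i (1 : ℝ)
        + Real.sin θ • EuclideanSpace.single j (1 : ℝ) := by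
    rw [planeRotLin_apply]
    simp [hij.symm]
    module
  have rot2 (θ : ℝ) : planeRotLin i j θ (EuclideanSpace.single j 1) =
      -Real.sin θ • EuclideanSpace.single i (1 : ℝ)
        + Real.cos θ • EuclideanSpace.single j (1 : ℝ) := by
    rw [planeRotLin_apply]
    simp [hij]
    module
  have hf1 : Continuous fun A : OGrp d => V (sphAct A (sphBasis i)) :=
    hV.continuous.comp (continuous_sphAct_left _)
  have hf2 := continuous_frameD hV i j
  have hder (A : OGrp d) (θ : ℝ) : HasDerivAt
      (fun s => V (sphAct (A * oRot hij s) (sphBasis i))) (frameD V i j (A * oRot hij θ)) θ := by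
    refine hV.hasDerivAt_comp ?_
    have : HasDerivAt (fun s => (Real.cos s • EuclideanSpace.single i (1 : ℝ)
        + Real.sin s • EuclideanSpace.single j (1 : ℝ) : E d))
        (-Real.sin θ • EuclideanSpace.single i (1 : ℝ)
        + Real.cos θ • EuclideanSpace.single j (1 : ℝ)) θ :=
      ((Real.hasDerivAt_cos θ).smul_const _).add ((Real.hasDerivAt_sin θ).smul_const _)
    have := (A : E d →L[ℝ] E d).hasFDerivAt.comp_hasDerivAt θ this
    simpa [oRot_apply, rot1, rot2, Function.comp_def] using this
  have hanti (A : OGrp d) : Function.Antiperiodic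
      (fun s => V (sphAct (A * oRot hij s) (sphBasis i))) Real.pi := by
    intro θ
    simp only
    rw [← hodd]
    congr 1
    ext1
    simp only [sphAct_coe, Submonoid.coe_mul, mul_apply_eq_comp, sphBasis_coe,
      oRot_apply, rot1, Real.cos_add_pi, Real.sin_add_pi, coe_neg_sphere]
    rw [← map_neg]
    congr 1
    module
  have hW (A : OGrp d) := wirtinger_antiperiodic (hder A)
    (hf2.comp (continuous_const.mul (continuous_oRot hij))) (hanti A)
  have hint (f : OGrp d → ℝ) (hf : Continuous f) :
      Integrable (fun A => ∫ θ in (0 : ℝ)..Real.pi, f (A * oRot hij θ)) (oMeasure d) := by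
    refine Continuous.integrable_oGrp ?_
    refine intervalIntegral.continuous_parametric_intervalIntegral_of_continuous' ?_ _ _
    exact hf.comp (continuous_fst.mul ((continuous_oRot hij).comp continuous_snd))
  have h := integral_mono (hint _ (hf1.pow 2)) (hint _ (hf2.pow 2)) hW
  rw [integral_integral_oRot (hf1.pow 2), integral_integral_oRot (hf2.pow 2)] at h
  exact le_of_mul_le_mul_left h Real.pi_pos

/-- The Poincaré inequality on the sphere for odd functions. -/
lemma RotInvariant.poincare_odd {μ : Measure (Sph d)} [IsFiniteMeasure μ]
    (hμ : RotInvariant μ) {V : Sph d → ℝ} (hV : SphSmooth V) (hodd : ∀ σ, V (-σ) = -V σ) :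
    ((d : ℝ) - 1) * ∫ σ, V σ * V σ ∂μ ≤ ∫ σ, ∑ k, sphD k V σ * sphD k V σ ∂μ := by
  rcases isEmpty_or_nonempty (Fin d) with hemp | ⟨⟨i⟩⟩
  · have : IsEmpty (Sph d) := ⟨fun σ => σ.ne_zero (Subsingleton.elim _ _)⟩
    rw [Measure.eq_zero_of_isEmpty μ]
    simp
  have hc2 : Continuous fun σ => ∑ k, sphD k V σ * sphD k V σ :=
    continuous_finsetSum _ fun k _ =>
      (hV.sphD_smooth k).continuous.mul (hV.sphD_smooth k).continuous
  have e1 := hμ.integral_eq_oMeasure (hV.continuous.mul hV.continuous) (sphBasis i)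
  have e2 := hμ.integral_eq_oMeasure hc2 (sphBasis i)
  have h1 : ((d : ℝ) - 1) * ∫ A, V (sphAct A (sphBasis i)) ^ 2 ∂oMeasure d ≤
      ∫ A, ∑ j, frameD V i j A ^ 2 ∂oMeasure d := by
    rw [integral_finsetSum (f := fun j A => frameD V i j A ^ 2) _
      fun j _ => ((continuous_frameD hV i j).pow 2).integrable_oGrp,
      ← Finset.add_sum_erase _ _ (Finset.mem_univ i)]
    simp only [frameD_self hV]
    have : ∀ j ∈ Finset.univ.erase i, ∫ A, V (sphAct A (sphBasis i)) ^ 2 ∂oMeasure d ≤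
        ∫ A, frameD V i j A ^ 2 ∂oMeasure d := fun j hj =>
      integral_sq_le_frameD hV hodd (Finset.ne_of_mem_erase hj).symm
    have := Finset.card_nsmul_le_sum _ _ _ this
    rw [Finset.card_erase_of_mem (Finset.mem_univ i), Finset.card_univ, Fintype.card_fin,
      nsmul_eq_mul, Nat.cast_sub (Fin.pos i)] at this
    simpa using this
  simp only [sum_frameD_sq] at h1
  refine le_of_mul_le_mul_left ?_ (oMeasure_univ_pos (d := d))
  simp only [Pi.mul_apply] at e1
  rw [e2, mul_left_comm, e1, mul_left_comm]
  refine mul_le_mul_of_nonneg_left ?_ measureReal_nonneg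
  simpa only [sq] using h1

end Poincare

section Bochner

variable {d : ℕ}

lemma sphLap_add {F G : Sph d → ℝ} (hF : SphSmooth F) (hG : SphSmooth G) (σ : Sph d) :
    sphLap (fun τ => F τ + G τ) σ = sphLap F σ + sphLap G σ := by
  rw [sphLap_eq (hF.add hG), sphLap_eq hF, sphLap_eq hG, ← Finset.sum_add_distrib]
  refine Finset.sum_congr rfl fun i _ => ?_
  have : sphD i (fun τ => F τ + G τ) = fun τ => sphD i F τ + sphD i G τ :=
    funext fun τ => sphD_add hF hG i τ
  rw [this, sphD_add (hF.sphD_smooth i) (hG.sphD_smooth i)]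

lemma sphLap_const_mul {F : Sph d → ℝ} (hF : SphSmooth F) (c : ℝ) (σ : Sph d) :
    sphLap (fun τ => c * F τ) σ = c * sphLap F σ := by
  rw [sphLap_eq (hF.const_mul c), sphLap_eq hF, Finset.mul_sum]
  refine Finset.sum_congr rfl fun i _ => ?_
  have : sphD i (fun τ => c * F τ) = fun τ => c * sphD i F τ :=
    funext fun τ => sphD_const_mul hF c i τ
  rw [this, sphD_const_mul (hF.sphD_smooth i)]

lemma sphLap_mul {F G : Sph d → ℝ} (hF : SphSmooth F) (hG : SphSmooth G) (σ : Sph d) :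
    sphLap (fun τ => F τ * G τ) σ =
      F σ * sphLap G σ + 2 * ∑ i, sphD i F σ * sphD i G σ + G σ * sphLap F σ := by
  rw [sphLap_eq (hF.mul hG), sphLap_eq hF, sphLap_eq hG, Finset.mul_sum, Finset.mul_sum,
    Finset.mul_sum, ← Finset.sum_add_distrib, ← Finset.sum_add_distrib]
  refine Finset.sum_congr rfl fun i _ => ?_
  have : sphD i (fun τ => F τ * G τ) = fun τ => F τ * sphD i G τ + G τ * sphD i F τ :=
    funext fun τ => sphD_mul hF hG i τ
  rw [this, sphD_add (hF.mul (hG.sphD_smooth i)) (hG.mul (hF.sphD_smooth i)),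
    sphD_mul hF (hG.sphD_smooth i), sphD_mul hG (hF.sphD_smooth i)]
  ring

lemma sphLap_sphX (i : Fin d) (σ : Sph d) : sphLap (sphX i) σ = -((d : ℝ) - 1) * sphX i σ := by
  rw [sphLap_eq (sphSmooth_sphX i)]
  have h (j : Fin d) : sphD j (sphX i) = fun τ => (if i = j then 1 else 0) - sphX j τ * sphX i τ := by
    funext τ
    rw [sphD_sphX]
    by_cases hij : i = j
    · simp [hij]
    · simp [hij, Ne.symm hij]
  have h2 (j : Fin d) : sphD j (sphD j (sphX i)) σ =
      -(if i = j then sphX j σ else 0) + 2 * sphX i σ * (sphX j σ * sphX j σ) - sphX i σ := by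
    rw [h j, sphD_sub (sphSmooth_const _) ((sphSmooth_sphX j).mul (sphSmooth_sphX i)), sphD_const,
      sphD_mul (sphSmooth_sphX j) (sphSmooth_sphX i), sphD_sphX, sphD_sphX]
    by_cases hij : i = j
    · subst hij; simp; ring
    · simp [hij, Ne.symm hij]; ring
  simp_rw [h2, Finset.sum_sub_distrib, Finset.sum_add_distrib, ← Finset.mul_sum, sum_sphX_sq]
  simp
  ring

lemma sum_sphD_sphX_mul {G : Sph d → ℝ} (hG : SphSmooth G) (i : Fin d) (σ : Sph d) :
    ∑ j, sphD j (sphX i) σ * sphD j G σ = sphD i G σ := by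
  have h (j : Fin d) : sphD j (sphX i) σ * sphD j G σ =
      (if i = j then sphD j G σ else 0) - sphX i σ * (sphX j σ * sphD j G σ) := by
    rw [sphD_sphX]
    by_cases hij : i = j
    · subst hij; simp; ring
    · simp [hij, Ne.symm hij]; ring
  simp_rw [h, Finset.sum_sub_distrib, ← Finset.mul_sum, sum_sphX_sphD hG]
  simp

lemma sphLap_sphX_mul {G : Sph d → ℝ} (hG : SphSmooth G) (i : Fin d) (σ : Sph d) :
    sphLap (fun τ => sphX i τ * G τ) σ =
      sphX i σ * sphLap G σ + 2 * sphD i G σ - ((d : ℝ) - 1) * (sphX i σ * G σ) := by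
  rw [sphLap_mul (sphSmooth_sphX i) hG, sum_sphD_sphX_mul hG, sphLap_sphX]
  ring

lemma sphLap_sphD {G : Sph d → ℝ} (hG : SphSmooth G) (i : Fin d) (σ : Sph d) :
    sphLap (sphD i G) σ =
      sphD i (sphLap G) σ - 2 * sphX i σ * sphLap G σ + ((d : ℝ) - 3) * sphD i G σ := by
  have hS : sphLap G = fun τ => ∑ j, sphD j (sphD j G) τ := funext fun τ => sphLap_eq hG τ
  have e1 (j : Fin d) : sphD j (sphD i G) =
      fun τ => (sphD i (sphD j G) τ + sphX j τ * sphD i G τ) - sphX i τ * sphD j G τ :=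
    funext fun τ => sphD_comm hG i j τ
  have X := fun j : Fin d => sphSmooth_sphX j
  have D := fun j : Fin d => hG.sphD_smooth j
  have e2 (j : Fin d) : sphD j (sphD j (sphD i G)) σ =
      sphD i (sphD j (sphD j G)) σ - 2 * sphX i σ * sphD j (sphD j G) σ
        + sphD i G σ - 2 * ((sphX j σ * sphX j σ) * sphD i G σ)
        - (if i = j then sphD j G σ else 0) + 2 * (sphX i σ * (sphX j σ * sphD j G σ))
        + 2 * (sphX j σ * sphD j (sphD i G) σ) := by
    have h := sphD_comm hG i j σ
    nth_rewrite 1 [e1 j]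
    rw [sphD_sub (((D j).sphD_smooth i).add ((X j).mul (D i))) ((X i).mul (D j)),
      sphD_add ((D j).sphD_smooth i) ((X j).mul (D i)), sphD_mul (X j) (D i),
      sphD_mul (X i) (D j), sphD_comm (D j) i j, sphD_sphX, sphD_sphX]
    rw [h]
    by_cases hij : i = j
    · subst hij; simp; ring
    · simp [hij, Ne.symm hij]; ring
  have e3 : sphD i (sphLap G) σ = ∑ j, sphD i (sphD j (sphD j G)) σ := by
    rw [hS, sphD_sum _ fun j _ => (D j).sphD_smooth j]
  rw [sphLap_eq (D i), e3, sphLap_eq hG]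
  simp_rw [e2, Finset.sum_add_distrib, Finset.sum_sub_distrib, Finset.sum_add_distrib,
    Finset.sum_sub_distrib, ← Finset.mul_sum, ← Finset.sum_mul, sum_sphX_sphD hG,
    sum_sphX_sphD (D i), sum_sphX_sq]
  simp
  ring

lemma homogExt_neg_of_even {F : Sph d → ℝ} (hF : ∀ σ, F (-σ) = F σ) (x : E d) :
    homogExt F (-x) = homogExt F x := by
  by_cases hx : x = 0
  · simp [hx]
  · rw [homogExt_of_ne F hx, homogExt_of_ne F (neg_ne_zero.2 hx), ← hF]
    congr 1
    ext1
    simp [sphProj]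

lemma sphD_neg_of_even {F : Sph d → ℝ} (hF : ∀ σ, F (-σ) = F σ) (i : Fin d) (σ : Sph d) :
    sphD i F (-σ) = -sphD i F σ := by
  have h := fderiv_comp_smul (𝕜 := ℝ) (f := homogExt F) (x := (σ : E d)) (-1)
  have h2 : (fun y => homogExt F ((-1 : ℝ) • y)) = homogExt F :=
    funext fun y => by rw [neg_one_smul, homogExt_neg_of_even hF y]
  rw [h2, neg_one_smul] at h
  rw [sphD, sphD, h, coe_neg_sphere]
  simp

/-- The integrated curvature-dimension inequality for even functions. -/
lemma RotInvariant.two_mul_dim_mul_le {μ : Measure (Sph d)} [IsFiniteMeasure μ]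
    (hμ : RotInvariant μ) {G : Sph d → ℝ} (hG : SphSmooth G) (heven : ∀ σ, G (-σ) = G σ) :
    2 * (d : ℝ) * ∫ σ, ∑ i, sphD i G σ * sphD i G σ ∂μ ≤
      ∫ σ, sphLap G σ * sphLap G σ ∂μ := by
  have X := fun i : Fin d => sphSmooth_sphX i
  have D := fun i : Fin d => hG.sphD_smooth i
  have S := hG.sphLap_smooth
  set V : Fin d → Sph d → ℝ := fun i τ => sphD i G τ + 2 * (sphX i τ * G τ) with hV
  have hVs (i : Fin d) : SphSmooth (V i) := (D i).add (((X i).mul hG).const_mul 2)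
  have hVodd (i : Fin d) (σ : Sph d) : V i (-σ) = -V i σ := by
    simp only [hV, sphD_neg_of_even heven, heven, sphX, coe_neg_sphere, PiLp.neg_apply]
    ring
  have hVL (i : Fin d) (σ : Sph d) : sphLap (V i) σ =
      ((d : ℝ) + 1) * sphD i G σ + sphD i (sphLap G) σ - 2 * ((d : ℝ) - 1) * (sphX i σ * G σ) := by
    rw [hV]
    simp only
    rw [sphLap_add (D i) (((X i).mul hG).const_mul 2), sphLap_const_mul ((X i).mul hG),
      sphLap_sphX_mul hG, sphLap_sphD hG]
    ring
  have hp (i : Fin d) : ((d : ℝ) - 1) * ∫ σ, V i σ * V i σ ∂μ ≤ -∫ σ, V i σ * sphLap (V i) σ ∂μ := by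
    rw [hμ.integral_mul_sphLap (hVs i) (hVs i), neg_neg]
    exact hμ.poincare_odd (hVs i) (hVodd i)
  have hs := Finset.sum_le_sum fun i (_ : i ∈ Finset.univ) => hp i
  rw [← Finset.mul_sum, Finset.sum_neg_distrib,
    ← integral_finsetSum _ fun i _ => ((hVs i).mul (hVs i)).continuous.integrable_sph,
    ← integral_finsetSum _ fun i _ => ((hVs i).mul (hVs i).sphLap_smooth).continuous.integrable_sph]
    at hs
  have p1 (σ : Sph d) : ∑ i, V i σ * V i σ = ∑ i, sphD i G σ * sphD i G σ + 4 * (G σ * G σ) := by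
    have h (i : Fin d) : V i σ * V i σ = sphD i G σ * sphD i G σ
        + 4 * G σ * (sphX i σ * sphD i G σ) + 4 * (G σ * G σ) * (sphX i σ * sphX i σ) := by
      simp only [hV]; ring
    simp_rw [h, Finset.sum_add_distrib, ← Finset.mul_sum, sum_sphX_sphD hG, sum_sphX_sq]
    ring
  have p2 (σ : Sph d) : ∑ i, V i σ * sphLap (V i) σ =
      ((d : ℝ) + 1) * ∑ i, sphD i G σ * sphD i G σ + ∑ i, sphD i G σ * sphD i (sphLap G) σ
        - 4 * ((d : ℝ) - 1) * (G σ * G σ) := by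
    have h (i : Fin d) : V i σ * sphLap (V i) σ = ((d : ℝ) + 1) * (sphD i G σ * sphD i G σ)
        + sphD i G σ * sphD i (sphLap G) σ + 4 * G σ * (sphX i σ * sphD i G σ)
        + 2 * G σ * (sphX i σ * sphD i (sphLap G) σ)
        - 4 * ((d : ℝ) - 1) * (G σ * G σ) * (sphX i σ * sphX i σ) := by
      rw [hVL]; simp only [hV]; ring
    simp_rw [h, Finset.sum_sub_distrib, Finset.sum_add_distrib, ← Finset.mul_sum,
      sum_sphX_sphD hG, sum_sphX_sphD S, sum_sphX_sq]
    ring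
  have i1 : Integrable (fun σ => ∑ i, sphD i G σ * sphD i G σ) μ :=
    (sphSmooth_sum _ fun i _ => (D i).mul (D i)).continuous.integrable_sph
  have i2 : Integrable (fun σ => ∑ i, sphD i G σ * sphD i (sphLap G) σ) μ :=
    (sphSmooth_sum _ fun i _ => (D i).mul (S.sphD_smooth i)).continuous.integrable_sph
  have i3 : Integrable (fun σ => G σ * G σ) μ := (hG.mul hG).continuous.integrable_sph
  simp_rw [p1, p2] at hs
  rw [integral_add i1 (i3.const_mul _), integral_sub (f := fun σ => ((d : ℝ) + 1) * ∑ i, sphD i G σ * sphD i G σ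
      + ∑ i, sphD i G σ * sphD i (sphLap G) σ) ((i1.const_mul _).add i2) (i3.const_mul _),
    integral_add (i1.const_mul _) i2] at hs
  simp only [integral_const_mul] at hs
  have hgreen : ∫ σ, ∑ i, sphD i G σ * sphD i (sphLap G) σ ∂μ = -∫ σ, sphLap G σ * sphLap G σ ∂μ := by
    rw [hμ.integral_mul_sphLap S hG, neg_neg]
    simp_rw [mul_comm]
  rw [hgreen] at hs
  linarith

end Bochner

section Calculus

lemma le_of_tendsto_of_deriv_nonneg {f f' : ℝ → ℝ} {L : ℝ}
    (hd : ∀ t, 0 < t → HasDerivAt f (f' t) t) (h0 : ∀ t, 0 < t → 0 ≤ f' t)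
    (hL : Filter.Tendsto f (nhdsWithin 0 (Set.Ioi 0)) (nhds L)) {t : ℝ} (ht : 0 < t) : L ≤ f t := by
  have hmono : MonotoneOn f (Set.Ioi 0) := by
    refine monotoneOn_of_deriv_nonneg (convex_Ioi 0)
      (fun s hs => (hd s hs).continuousAt.continuousWithinAt) ?_ ?_
    · rw [interior_Ioi]
      exact fun s hs => (hd s hs).differentiableAt.differentiableWithinAt
    · rw [interior_Ioi]
      intro s hs
      rw [(hd s hs).deriv]
      exact h0 s hs
  refine le_of_tendsto hL ?_
  filter_upwards [Ioc_mem_nhdsGT ht] with s hs using hmono hs.1 ht hs.2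

lemma eq_of_tendsto_of_deriv_eq_zero {f : ℝ → ℝ} {L : ℝ}
    (hd : ∀ t, 0 < t → HasDerivAt f 0 t)
    (hL : Filter.Tendsto f (nhdsWithin 0 (Set.Ioi 0)) (nhds L)) {t : ℝ} (ht : 0 < t) : f t = L := by
  refine le_antisymm ?_ (le_of_tendsto_of_deriv_nonneg hd (fun _ _ => le_rfl) hL ht)
  have := le_of_tendsto_of_deriv_nonneg (f := fun t => -f t) (f' := fun _ => 0)
    (fun t ht => (hd t ht).neg.congr_deriv neg_zero) (fun _ _ => le_rfl) hL.neg ht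
  linarith

variable {d : ℕ}

lemma hasDerivAt_integral_sph {μ : Measure (Sph d)} [IsFiniteMeasure μ] {φ ψ : ℝ → Sph d → ℝ}
    {I : Set ℝ} (hI : IsOpen I) (hφ : ∀ s ∈ I, Continuous (φ s))
    (hd : ∀ s ∈ I, ∀ σ, HasDerivAt (fun r => φ r σ) (ψ s σ) s)
    (hψ : ContinuousOn (fun p : ℝ × Sph d => ψ p.1 p.2) (I ×ˢ Set.univ)) {s : ℝ} (hs : s ∈ I) :
    HasDerivAt (fun r => ∫ σ, φ r σ ∂μ) (∫ σ, ψ s σ ∂μ) s := by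
  obtain ⟨ε, hε, hball⟩ := Metric.nhds_basis_closedBall.mem_iff.1 (hI.mem_nhds hs)
  obtain ⟨C, hC⟩ := ((isCompact_closedBall s ε).prod
    (isCompact_univ (X := Sph d))).exists_bound_of_continuousOn
    (hψ.mono (Set.prod_mono hball subset_rfl))
  have hψs : Continuous (ψ s) := by
    rw [← continuousOn_univ]
    exact hψ.comp (f := fun σ : Sph d => (s, σ)) (by fun_prop) fun σ _ => ⟨hs, trivial⟩
  exact (hasDerivAt_integral_of_dominated_loc_of_deriv_le (μ := μ) (s := Metric.closedBall s ε)
    (F := φ) (F' := ψ) (bound := fun _ => C) (Metric.closedBall_mem_nhds s hε)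
    (Filter.eventually_of_mem (hI.mem_nhds hs) fun r hr => (hφ r hr).aestronglyMeasurable)
    (hφ s hs).integrable_sph hψs.aestronglyMeasurable
    (.of_forall fun σ r hr => hC (r, σ) ⟨hr, trivial⟩) (integrable_const C)
    (.of_forall fun σ r hr => hd r (hball hr) σ)).2

end Calculus

section Heat

variable {d : ℕ} {u : ℝ → ℝ → ℝ} {F : Sph d → ℝ}

lemma IsHeatKernel.smooth (hu : IsHeatKernel d u) (hF : SphSmooth F) {t : ℝ} (ht : 0 < t) :
    SphSmooth (heatU u F t) := by
  have h := (hu.2.2 F hF).1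
  exact h.comp (f := fun x : E d => (t, x)) (by fun_prop) fun x hx => ⟨ht, hx⟩

lemma IsHeatKernel.hasDerivAt (hu : IsHeatKernel d u) (hF : SphSmooth F) {t : ℝ} (ht : 0 < t)
    (σ : Sph d) : HasDerivAt (fun s => heatU u F s σ) (sphLap (heatU u F t) σ) t :=
  (hu.2.2 F hF).2.1 t ht σ

lemma IsHeatKernel.continuousOn (hu : IsHeatKernel d u) (hF : SphSmooth F) :
    ContinuousOn (fun p : ℝ × Sph d => heatU u F p.1 p.2) (Set.Ioi 0 ×ˢ Set.univ) := by
  have h := (hu.2.2 F hF).1.continuousOn.comp (f := fun p : ℝ × Sph d => (p.1, (p.2 : E d)))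
    (s := Set.Ioi 0 ×ˢ Set.univ) (by fun_prop) fun p hp => ⟨hp.1, p.2.ne_zero⟩
  simpa [Function.comp_def] using h

lemma IsHeatKernel.continuousOn_sphLap (hu : IsHeatKernel d u) (hF : SphSmooth F) :
    ContinuousOn (fun p : ℝ × Sph d => sphLap (heatU u F p.1) p.2) (Set.Ioi 0 ×ˢ Set.univ) := by
  set Φ : ℝ × E d → ℝ := fun p => homogExt (fun σ => heatU u F p.1 σ) p.2 with hΦ
  have hΩ : IsOpen (Set.Ioi (0 : ℝ) ×ˢ {x : E d | x ≠ 0}) := isOpen_Ioi.prod isOpen_ne_zero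
  have hs : ContDiffOn ℝ (⊤ : ℕ∞) Φ (Set.Ioi (0 : ℝ) ×ˢ {x : E d | x ≠ 0}) := (hu.2.2 F hF).1
  have hf := hs.continuousOn_fderiv_of_isOpen hΩ (by simp)
  have h := hf.comp (f := fun p : ℝ × Sph d => (p.1, (p.2 : E d)))
    (s := Set.Ioi 0 ×ˢ Set.univ) (by fun_prop) fun p hp => ⟨hp.1, p.2.ne_zero⟩
  refine (h.clm_apply (continuousOn_const (c := ((1 : ℝ), (0 : E d))))).congr fun p hp => ?_
  have hmem : (p.1, (p.2 : E d)) ∈ Set.Ioi (0 : ℝ) ×ˢ {x : E d | x ≠ 0} := ⟨hp.1, p.2.ne_zero⟩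
  have hdiff : DifferentiableAt ℝ Φ (p.1, (p.2 : E d)) :=
    (hs.contDiffAt (hΩ.mem_nhds hmem)).differentiableAt (by simp)
  have hcurve : HasDerivAt (fun r : ℝ => (r, (p.2 : E d))) ((1 : ℝ), (0 : E d)) p.1 :=
    (hasDerivAt_id p.1).prodMk (hasDerivAt_const _ _)
  have h1 := hdiff.hasFDerivAt.comp_hasDerivAt p.1 hcurve
  have h2 := hu.hasDerivAt hF hp.1 p.2
  simp only [hΦ, Function.comp_def, homogExt_coe] at h1
  exact h2.unique h1

lemma IsHeatKernel.tendsto (hu : IsHeatKernel d u) (hF : SphSmooth F) (σ : Sph d) :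
    Filter.Tendsto (fun t => heatU u F t σ) (nhdsWithin 0 (Set.Ioi 0)) (nhds (F σ)) :=
  (hu.2.2 F hF).2.2.tendsto_at σ

lemma heatU_sphIso (R : E d ≃ₗᵢ[ℝ] E d) (hF : ∀ σ, F (sphIso R σ) = F σ) (t : ℝ) (σ : Sph d) :
    heatU u F t (sphIso R σ) = heatU u F t σ := by
  have h := rotInvariant_sphMeasure.integral_comp R
    (fun σ' : Sph d => F σ' * u t ⟪(σ' : E d), (sphIso R σ : E d)⟫)
  rw [heatU, heatU, ← h]
  simp only [hF, sphIso_coe, LinearIsometryEquiv.inner_map_map]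

lemma heatU_neg (hF : ∀ σ, F (-σ) = F σ) (t : ℝ) (σ : Sph d) :
    heatU u F t (-σ) = heatU u F t σ := by
  have h (τ : Sph d) : sphIso (LinearIsometryEquiv.neg ℝ) τ = -τ := by ext1; simp
  rw [← h]
  exact heatU_sphIso _ (fun τ => by rw [h, hF]) t σ

/-- A heat kernel has total mass one. -/
lemma IsHeatKernel.heatU_one (hu : IsHeatKernel d u) {t : ℝ} (ht : 0 < t) (σ : Sph d) :
    heatU u (fun _ => 1) t σ = 1 := by
  have h1 : SphSmooth (fun _ : Sph d => (1 : ℝ)) := sphSmooth_const 1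
  have hconst (s : ℝ) : heatU u (fun _ : Sph d => 1) s =
      fun _ => heatU u (fun _ : Sph d => 1) s σ := by
    funext τ
    obtain ⟨R, rfl⟩ := exists_sphIso_eq σ τ
    exact heatU_sphIso R (fun _ => rfl) s σ
  have hlap (s : ℝ) : sphLap (heatU u (fun _ : Sph d => 1) s) σ = 0 := by
    have hz : ∀ i : Fin d, sphD i (fun _ : Sph d => heatU u (fun _ : Sph d => 1) s σ) = fun _ => 0 :=
      fun i => funext fun τ => sphD_const _ i τ
    rw [hconst s, sphLap_eq (sphSmooth_const _)]
    simp [hz, sphD_const]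
  exact eq_of_tendsto_of_deriv_eq_zero (f := fun s => heatU u (fun _ => 1) s σ)
    (fun s hs => by simpa [hlap s] using hu.hasDerivAt h1 hs σ) (hu.tendsto h1 σ) ht

lemma RotInvariant.integral_sphLap_comm {μ : Measure (Sph d)} [IsFiniteMeasure μ]
    (hμ : RotInvariant μ) {F G : Sph d → ℝ} (hF : SphSmooth F) (hG : SphSmooth G) :
    ∫ σ, F σ * sphLap G σ ∂μ = ∫ σ, sphLap F σ * G σ ∂μ := by
  simp_rw [mul_comm (sphLap F _)]
  rw [hμ.integral_mul_sphLap hF hG, hμ.integral_mul_sphLap hG hF]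
  simp_rw [mul_comm]

variable [IsFiniteMeasure (sphMeasure d)]

lemma IsHeatKernel.tendsto_integral (hu : IsHeatKernel d u) (hF : SphSmooth F)
    {g : ℝ → Sph d → ℝ} {g₀ : Sph d → ℝ} {C : ℝ}
    (hgc : ∀ᶠ t in nhdsWithin 0 (Set.Ioi 0), Continuous (g t))
    (hgb : ∀ᶠ t in nhdsWithin 0 (Set.Ioi 0), ∀ σ, |g t σ| ≤ C)
    (hg : ∀ σ, Filter.Tendsto (fun t => g t σ) (nhdsWithin 0 (Set.Ioi 0)) (nhds (g₀ σ))) :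
    Filter.Tendsto (fun t => ∫ σ, g t σ * heatU u F t σ ∂sphMeasure d)
      (nhdsWithin 0 (Set.Ioi 0)) (nhds (∫ σ, g₀ σ * F σ ∂sphMeasure d)) := by
  obtain ⟨M, hM⟩ := hF.continuous.exists_abs_le_sph
  refine tendsto_integral_filter_of_dominated_convergence (fun _ => C * (M + 1)) ?_ ?_
    (integrable_const _) (.of_forall fun σ => (hg σ).mul (hu.tendsto hF σ))
  · filter_upwards [hgc, self_mem_nhdsWithin] with t h1 ht
    exact (h1.mul (hu.smooth hF ht).continuous).aestronglyMeasurable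
  · have hunif := Metric.tendstoUniformly_iff.1 (hu.2.2 F hF).2.2 1 one_pos
    filter_upwards [hgb, hunif] with t h1 h2
    refine .of_forall fun σ => ?_
    have h3 := h2 σ
    rw [Real.dist_eq] at h3
    rw [norm_mul]
    refine mul_le_mul (h1 σ) ?_ (norm_nonneg _) ((abs_nonneg _).trans (h1 σ))
    have := abs_sub_abs_le_abs_sub (heatU u F t σ) (F σ)
    rw [abs_sub_comm] at this
    rw [Real.norm_eq_abs]
    linarith [hM σ]

lemma IsHeatKernel.tendsto_integral_const (hu : IsHeatKernel d u) (hF : SphSmooth F)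
    {g : Sph d → ℝ} (hg : Continuous g) :
    Filter.Tendsto (fun t => ∫ σ, g σ * heatU u F t σ ∂sphMeasure d)
      (nhdsWithin 0 (Set.Ioi 0)) (nhds (∫ σ, g σ * F σ ∂sphMeasure d)) := by
  obtain ⟨C, hC⟩ := hg.exists_abs_le_sph
  exact hu.tendsto_integral hF (.of_forall fun _ => hg) (.of_forall fun _ => hC)
    fun σ => tendsto_const_nhds

lemma IsHeatKernel.hasDerivAt_integral (hu : IsHeatKernel d u) (hF : SphSmooth F)
    {g : Sph d → ℝ} (hg : Continuous g) {t : ℝ} (ht : 0 < t) :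
    HasDerivAt (fun s => ∫ σ, g σ * heatU u F s σ ∂sphMeasure d)
      (∫ σ, g σ * sphLap (heatU u F t) σ ∂sphMeasure d) t :=
  hasDerivAt_integral_sph isOpen_Ioi (fun _ hs => hg.mul (hu.smooth hF hs).continuous)
    (fun _ hs σ => (hu.hasDerivAt hF hs σ).const_mul (g σ))
    ((hg.comp continuous_snd).continuousOn.mul (hu.continuousOn_sphLap hF)) ht

/-- The heat flow preserves integrals. -/
lemma IsHeatKernel.integral_heatU (hu : IsHeatKernel d u) (hF : SphSmooth F) {t : ℝ} (ht : 0 < t) :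
    ∫ σ, heatU u F t σ ∂sphMeasure d = ∫ σ, F σ ∂sphMeasure d := by
  have hd (s : ℝ) (hs : 0 < s) := hu.hasDerivAt_integral hF (g := fun _ => 1) continuous_const hs
  have hz (s : ℝ) (hs : 0 < s) : ∫ σ, 1 * sphLap (heatU u F s) σ ∂sphMeasure d = 0 := by
    rw [rotInvariant_sphMeasure.integral_mul_sphLap (sphSmooth_const 1) (hu.smooth hF hs)]
    simp [sphD_const]
  have := eq_of_tendsto_of_deriv_eq_zero (fun s hs => (hd s hs).congr_deriv (hz s hs))
    (hu.tendsto_integral_const hF continuous_const) ht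
  simpa using this

/-- The semigroup property of the heat flow. -/
lemma IsHeatKernel.integral_mul_heatU_add (hu : IsHeatKernel d u) (hF : SphSmooth F) {s t : ℝ}
    (hs : 0 < s) (ht : 0 < t) :
    ∫ σ, F σ * heatU u F (s + t) σ ∂sphMeasure d =
      ∫ σ, heatU u F s σ * heatU u F t σ ∂sphMeasure d := by
  set T := s + t with hT
  have hT0 : 0 < T := add_pos hs ht
  set K : ℝ → ℝ := fun r => ∫ σ, heatU u F (T - r) σ * heatU u F r σ ∂sphMeasure d with hK
  have hpos (r : ℝ) (hr : r ∈ Set.Ioo 0 T) : 0 < T - r := sub_pos.2 hr.2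
  have hder (r : ℝ) (hr : r ∈ Set.Ioo 0 T) : HasDerivAt K 0 r := by
    have h := hasDerivAt_integral_sph (μ := sphMeasure d) (I := Set.Ioo 0 T)
      (φ := fun r σ => heatU u F (T - r) σ * heatU u F r σ)
      (ψ := fun r σ => -sphLap (heatU u F (T - r)) σ * heatU u F r σ
        + heatU u F (T - r) σ * sphLap (heatU u F r) σ) isOpen_Ioo
      (fun q hq => (hu.smooth hF (hpos q hq)).continuous.mul (hu.smooth hF hq.1).continuous)
      (fun q hq σ => by
        have h1 := (hu.hasDerivAt hF (hpos q hq) σ).comp_const_sub T q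
        exact h1.mul (hu.hasDerivAt hF hq.1 σ))
      (by
        have m1 : Set.MapsTo (fun p : ℝ × Sph d => (T - p.1, p.2)) (Set.Ioo 0 T ×ˢ Set.univ)
            (Set.Ioi 0 ×ˢ Set.univ) := fun p hp => ⟨hpos p.1 hp.1, trivial⟩
        have m2 : Set.Ioo 0 T ×ˢ (Set.univ : Set (Sph d)) ⊆ Set.Ioi 0 ×ˢ Set.univ :=
          Set.prod_mono Set.Ioo_subset_Ioi_self subset_rfl
        have c1 := (hu.continuousOn_sphLap hF).comp (by fun_prop) m1
        have c2 := (hu.continuousOn hF).comp (by fun_prop) m1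
        exact (c1.neg.mul ((hu.continuousOn hF).mono m2)).add
          (c2.mul ((hu.continuousOn_sphLap hF).mono m2))) hr
    refine h.congr_deriv ?_
    have sm1 := hu.smooth hF (hpos r hr)
    have sm2 := hu.smooth hF hr.1
    rw [integral_add (f := fun σ => -sphLap (heatU u F (T - r)) σ * heatU u F r σ)
      (g := fun σ => heatU u F (T - r) σ * sphLap (heatU u F r) σ)
      (sm1.sphLap_smooth.continuous.neg.mul sm2.continuous).integrable_sph
      (sm1.mul sm2.sphLap_smooth).continuous.integrable_sph,
      rotInvariant_sphMeasure.integral_sphLap_comm sm1 sm2]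
    simp only [neg_mul, integral_neg]
    ring
  have hlim : Filter.Tendsto K (nhdsWithin 0 (Set.Ioi 0))
      (nhds (∫ σ, heatU u F T σ * F σ ∂sphMeasure d)) := by
    obtain ⟨C, hC⟩ := ((isCompact_Icc (a := T / 2) (b := T)).prod
      (isCompact_univ (X := Sph d))).exists_bound_of_continuousOn ((hu.continuousOn hF).mono
        (Set.prod_mono (fun r hr => (half_pos hT0).trans_le hr.1) subset_rfl))
    have hev : ∀ᶠ r in nhdsWithin (0 : ℝ) (Set.Ioi 0), r ∈ Set.Ioo 0 (T / 2) :=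
      Ioo_mem_nhdsGT (half_pos hT0)
    refine hu.tendsto_integral hF (C := C) ?_ ?_ fun σ => ?_
    · filter_upwards [hev] with r hr
      exact (hu.smooth hF (by linarith [hr.2])).continuous
    · filter_upwards [hev] with r hr σ
      exact hC (T - r, σ) ⟨⟨by linarith [hr.2], by linarith [hr.1]⟩, trivial⟩
    · have h1 := (hu.hasDerivAt hF hT0 σ).continuousAt.tendsto
      have h2 : Filter.Tendsto (fun r : ℝ => T - r) (nhdsWithin 0 (Set.Ioi 0)) (nhds T) := by
        have : Continuous fun r : ℝ => T - r := by fun_prop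
        simpa using (this.tendsto 0).mono_left (nhdsWithin_le_nhds (s := Set.Ioi 0))
      exact h1.comp h2
  have hconst : ∀ r ∈ Set.Ioo 0 T, K r = K t := fun r hr =>
    isOpen_Ioo.is_const_of_deriv_eq_zero isPreconnected_Ioo
      (fun q hq => (hder q hq).differentiableAt.differentiableWithinAt)
      (fun q hq => (hder q hq).deriv) hr ⟨ht, by linarith⟩
  have hlim2 : Filter.Tendsto K (nhdsWithin 0 (Set.Ioi 0)) (nhds (K t)) :=
    tendsto_const_nhds.congr' (by
      filter_upwards [Ioo_mem_nhdsGT hT0] with r hr using (hconst r hr).symm)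
  have := tendsto_nhds_unique hlim hlim2
  simp only [hK, hT, add_sub_cancel_right] at this
  rw [← this]
  exact integral_congr_ae (.of_forall fun σ => mul_comm _ _)

/-- Exponential decay along the heat flow for even functions. -/
lemma IsHeatKernel.integral_mul_heatU_ge (hu : IsHeatKernel d u) (hd : 0 < d) (hF : SphSmooth F)
    (heven : ∀ σ, F (-σ) = F σ) {t : ℝ} (ht : 0 < t) :
    ∫ σ, F σ * F σ ∂sphMeasure d - (∫ σ, ∑ i, sphD i F σ * sphD i F σ ∂sphMeasure d) *
      ((1 - Real.exp (-(2 * (d : ℝ) * t))) / (2 * d)) ≤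
        ∫ σ, F σ * heatU u F t σ ∂sphMeasure d := by
  set D := ∫ σ, ∑ i, sphD i F σ * sphD i F σ ∂sphMeasure d with hD
  set A : ℝ → ℝ := fun t => ∫ σ, F σ * heatU u F t σ ∂sphMeasure d with hA
  set A' : ℝ → ℝ := fun t => ∫ σ, F σ * sphLap (heatU u F t) σ ∂sphMeasure d with hA'
  set A'' : ℝ → ℝ := fun t => ∫ σ, sphLap (heatU u F (t / 2)) σ * sphLap (heatU u F (t / 2)) σ
    ∂sphMeasure d with hA''
  have hd0 : (0 : ℝ) < d := Nat.cast_pos.2 hd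
  have hμ := rotInvariant_sphMeasure (d := d)
  have dA (t : ℝ) (ht : 0 < t) : HasDerivAt A (A' t) t :=
    hu.hasDerivAt_integral hF hF.continuous ht
  have eA' (s t : ℝ) (hs : 0 < s) (ht : 0 < t) : A' (s + t) =
      ∫ σ, sphLap (heatU u F s) σ * heatU u F t σ ∂sphMeasure d := by
    have h1 : HasDerivAt (fun r => A (s + r)) (A' (s + t)) t :=
      (dA (s + t) (add_pos hs ht)).comp_const_add s t
    have h2 := hu.hasDerivAt_integral hF (hu.smooth hF hs).continuous ht
    rw [← hμ.integral_sphLap_comm (hu.smooth hF hs) (hu.smooth hF ht)]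
    refine h1.unique (h2.congr_of_eventuallyEq ?_)
    filter_upwards [Ioi_mem_nhds ht] with r hr using hu.integral_mul_heatU_add hF hs hr
  have dA' (t : ℝ) (ht : 0 < t) : HasDerivAt A' (A'' t) t := by
    have h1 := hu.hasDerivAt_integral hF (hu.smooth hF (half_pos ht)).sphLap_smooth.continuous
      (half_pos ht)
    have h2 : HasDerivAt (fun r => A' (t / 2 + r)) (A'' t) (t / 2) := by
      refine h1.congr_of_eventuallyEq ?_
      filter_upwards [Ioi_mem_nhds (half_pos ht)] with r hr using eA' _ _ (half_pos ht) hr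
    have h3 := HasDerivAt.comp_sub_const (x := t) (a := t / 2)
      (f := fun r => A' (t / 2 + r)) (by rwa [sub_half])
    simpa using h3
  have hAA (t : ℝ) (ht : 0 < t) : 0 ≤ A'' t + 2 * d * A' t := by
    have h1 := hμ.two_mul_dim_mul_le (hu.smooth hF (half_pos ht)) (heatU_neg heven (t / 2))
    have h2 := eA' (t / 2) (t / 2) (half_pos ht) (half_pos ht)
    rw [add_halves, ← hμ.integral_sphLap_comm (hu.smooth hF (half_pos ht))
      (hu.smooth hF (half_pos ht)), hμ.integral_mul_sphLap (hu.smooth hF (half_pos ht))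
      (hu.smooth hF (half_pos ht))] at h2
    rw [h2]
    simp only [hA'']
    linarith
  have dexp (c t : ℝ) : HasDerivAt (fun t => Real.exp (c * t)) (c * Real.exp (c * t)) t := by
    have := ((hasDerivAt_id t).const_mul c).exp
    simpa [mul_comm] using this
  have limexp (c : ℝ) : Filter.Tendsto (fun t => Real.exp (c * t)) (nhdsWithin 0 (Set.Ioi 0))
      (nhds 1) := by
    have : Continuous fun t => Real.exp (c * t) := by fun_prop
    simpa using (this.tendsto 0).mono_left (nhdsWithin_le_nhds (s := Set.Ioi 0))
  have limA' : Filter.Tendsto A' (nhdsWithin 0 (Set.Ioi 0)) (nhds (-D)) := by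
    have h1 := hu.tendsto_integral_const hF hF.sphLap_smooth.continuous
    rw [← hμ.integral_sphLap_comm hF hF, hμ.integral_mul_sphLap hF hF] at h1
    refine h1.congr' ?_
    filter_upwards [self_mem_nhdsWithin] with t ht
    exact (hμ.integral_sphLap_comm hF (hu.smooth hF ht)).symm
  have lowA' (t : ℝ) (ht : 0 < t) : 0 ≤ A' t + D * Real.exp (-(2 * d) * t) := by
    have h := le_of_tendsto_of_deriv_nonneg (f := fun t => Real.exp (2 * d * t) * A' t)
      (fun t ht => (dexp (2 * d) t).mul (dA' t ht))
      (fun t ht => by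
        have := mul_nonneg (Real.exp_pos (2 * d * t)).le (hAA t ht)
        linarith) (by simpa using (limexp (2 * d)).mul limA') ht
    have h2 := mul_le_mul_of_nonneg_left h (Real.exp_pos (-(2 * d) * t)).le
    have h3 : Real.exp (-(2 * d) * t) * (Real.exp (2 * d * t) * A' t) = A' t := by
      rw [← mul_assoc, ← Real.exp_add]
      simp
    rw [h3] at h2
    linarith
  have limA : Filter.Tendsto A (nhdsWithin 0 (Set.Ioi 0)) (nhds (∫ σ, F σ * F σ ∂sphMeasure d)) :=
    hu.tendsto_integral_const hF hF.continuous
  have h := le_of_tendsto_of_deriv_nonneg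
    (f := fun t => A t - D * Real.exp (-(2 * d) * t) / (2 * d))
    (fun t ht => (dA t ht).sub (((dexp (-(2 * d)) t).const_mul D).div_const (2 * d)))
    (fun t ht => by
      have := lowA' t ht
      have h2 : D * (-(2 * d) * Real.exp (-(2 * d) * t)) / (2 * d) =
          -(D * Real.exp (-(2 * d) * t)) := by field_simp
      rw [h2]
      linarith)
    (limA.sub (((limexp (-(2 * d))).const_mul D).div_const (2 * d))) ht
  have e1 : -(2 * (d : ℝ) * t) = -(2 * d) * t := by ring
  rw [e1]
  have e2 : D * ((1 - Real.exp (-(2 * d) * t)) / (2 * d)) =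
      D * 1 / (2 * d) - D * Real.exp (-(2 * d) * t) / (2 * d) := by ring
  rw [e2]
  linarith

end Heat

section Subordination

lemma ofReal_integral_le_lintegral_ofReal {α : Type*} [MeasurableSpace α] {μ : Measure α}
    (f : α → ℝ) : ENNReal.ofReal (∫ x, f x ∂μ) ≤ ∫⁻ x, ENNReal.ofReal (f x) ∂μ := by
  by_cases hf : Integrable f μ
  · calc ENNReal.ofReal (∫ x, f x ∂μ) ≤ ENNReal.ofReal (∫ x, max (f x) 0 ∂μ) :=
          ENNReal.ofReal_le_ofReal (integral_mono hf hf.pos_part fun x => le_max_left _ _)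
      _ = ∫⁻ x, ENNReal.ofReal (max (f x) 0) ∂μ :=
          ofReal_integral_eq_lintegral_ofReal hf.pos_part (.of_forall fun x => le_max_right _ _)
      _ = ∫⁻ x, ENNReal.ofReal (f x) ∂μ := by simp [ENNReal.ofReal_max]
  · simp [integral_undef hf]

variable {d : ℕ} {u : ℝ → ℝ → ℝ} {F : Sph d → ℝ}

lemma inner_sph_mem_Icc (σ τ : Sph d) : ⟪(σ : E d), (τ : E d)⟫ ∈ Set.Icc (-1 : ℝ) 1 := by
  have h := abs_real_inner_le_norm (σ : E d) (τ : E d)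
  simp only [norm_eq_of_mem_sphere, mul_one] at h
  exact abs_le.1 h

lemma IsHeatKernel.integrable_mul (hu : IsHeatKernel d u) {t : ℝ} (ht : 0 < t) {g : Sph d → ℝ}
    (hg : Continuous g) (σ : Sph d) :
    Integrable (fun σ' : Sph d => g σ' * u t ⟪(σ' : E d), (σ : E d)⟫) (sphMeasure d) := by
  obtain ⟨C, hC⟩ := hg.exists_abs_le_sph
  have h1 : Integrable (fun σ' : Sph d => u t ⟪(σ' : E d), (σ : E d)⟫) (sphMeasure d) := by
    by_contra h
    have h2 := hu.heatU_one ht σ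
    simp only [heatU, one_mul, integral_undef h] at h2
    exact zero_ne_one h2
  exact h1.bdd_mul hg.aestronglyMeasurable (.of_forall hC)

lemma IsHeatKernel.integral_sq_sub_mul (hu : IsHeatKernel d u) {t : ℝ} (ht : 0 < t)
    (hF : Continuous F) (σ : Sph d) :
    ∫ σ' : Sph d, (F σ' - F σ) ^ 2 * u t ⟪(σ' : E d), (σ : E d)⟫ ∂sphMeasure d =
      heatU u (fun τ => F τ * F τ) t σ - 2 * (F σ * heatU u F t σ) + F σ * F σ := by
  have h1 := hu.integrable_mul ht (g := fun τ => F τ * F τ) (by fun_prop) σ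
  have h2 := (hu.integrable_mul ht hF σ).const_mul (2 * F σ)
  have h3 := (hu.integrable_mul ht (continuous_const (y := (1 : ℝ))) σ).const_mul (F σ * F σ)
  have e : ∀ σ' : Sph d, (F σ' - F σ) ^ 2 * u t ⟪(σ' : E d), (σ : E d)⟫ =
      F σ' * F σ' * u t ⟪(σ' : E d), (σ : E d)⟫ -
        2 * F σ * (F σ' * u t ⟪(σ' : E d), (σ : E d)⟫) +
        F σ * F σ * (1 * u t ⟪(σ' : E d), (σ : E d)⟫) := fun σ' => by ring
  have h4 := hu.heatU_one ht σ
  simp only [heatU] at h4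
  simp_rw [e]
  rw [integral_add (f := fun σ' : Sph d => F σ' * F σ' * u t ⟪(σ' : E d), (σ : E d)⟫ -
      2 * F σ * (F σ' * u t ⟪(σ' : E d), (σ : E d)⟫)) (h1.sub h2) h3, integral_sub h1 h2, integral_const_mul, integral_const_mul, h4]
  simp only [heatU]
  ring

/-- The energy of an even function for the heat kernel at time `t`. -/
lemma IsHeatKernel.lintegral_sq_sub_mul_le [IsFiniteMeasure (sphMeasure d)]
    (hu : IsHeatKernel d u) (hd : 0 < d) (hF : SphSmooth F) (heven : ∀ σ, F (-σ) = F σ) {t : ℝ}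
    (ht : 0 < t) :
    ∫⁻ σ : Sph d, ∫⁻ σ' : Sph d, ENNReal.ofReal ((F σ' - F σ) ^ 2 *
        u t ⟪(σ' : E d), (σ : E d)⟫) ∂sphMeasure d ∂sphMeasure d ≤
      ENNReal.ofReal ((1 - Real.exp (-(2 * (d : ℝ) * t))) / d *
        ∫ σ, ∑ i, sphD i F σ * sphD i F σ ∂sphMeasure d) := by
  have hc := hF.continuous
  have hnn (σ σ' : Sph d) : 0 ≤ (F σ' - F σ) ^ 2 * u t ⟪(σ' : E d), (σ : E d)⟫ :=
    mul_nonneg (sq_nonneg _) (hu.1 t ht _ (inner_sph_mem_Icc _ _))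
  have hint (σ : Sph d) : Integrable (fun σ' : Sph d => (F σ' - F σ) ^ 2 *
      u t ⟪(σ' : E d), (σ : E d)⟫) (sphMeasure d) :=
    hu.integrable_mul ht (g := fun σ' => (F σ' - F σ) ^ 2) (by fun_prop) σ
  have i1 := (hu.smooth (hF.mul hF) ht).continuous.integrable_sph (μ := sphMeasure d)
  have i2 := (hF.mul (hu.smooth hF ht)).continuous.integrable_sph (μ := sphMeasure d)
  have i3 := (hF.mul hF).continuous.integrable_sph (μ := sphMeasure d)
  have i4 := (i1.sub (i2.const_mul 2)).add i3
  calc _ = ∫⁻ σ : Sph d, ENNReal.ofReal (heatU u (fun τ => F τ * F τ) t σ -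
          2 * (F σ * heatU u F t σ) + F σ * F σ) ∂sphMeasure d := by
        refine lintegral_congr fun σ => ?_
        rw [← hu.integral_sq_sub_mul ht hc σ,
          ofReal_integral_eq_lintegral_ofReal (hint σ) (.of_forall (hnn σ))]
    _ = ENNReal.ofReal (∫ σ : Sph d, (heatU u (fun τ => F τ * F τ) t σ -
          2 * (F σ * heatU u F t σ) + F σ * F σ) ∂sphMeasure d) := by
        refine (ofReal_integral_eq_lintegral_ofReal i4 (.of_forall fun σ => ?_)).symm
        have : 0 ≤ ∫ σ' : Sph d, (F σ' - F σ) ^ 2 * u t ⟪(σ' : E d), (σ : E d)⟫ ∂sphMeasure d :=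
          integral_nonneg (hnn σ)
        rwa [hu.integral_sq_sub_mul ht hc σ] at this
    _ ≤ _ := by
        refine ENNReal.ofReal_le_ofReal ?_
        rw [integral_add (f := fun σ => heatU u (fun τ => F τ * F τ) t σ -
            2 * (F σ * heatU u F t σ)) (i1.sub (i2.const_mul 2)) i3,
          integral_sub i1 (i2.const_mul 2), integral_const_mul, hu.integral_heatU (hF.mul hF) ht]
        have h := hu.integral_mul_heatU_ge hd hF heven ht
        have hd0 : (0 : ℝ) < d := Nat.cast_pos.2 hd
        have e : (1 - Real.exp (-(2 * (d : ℝ) * t))) / d =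
            2 * ((1 - Real.exp (-(2 * (d : ℝ) * t))) / (2 * d)) := by field_simp
        rw [e]
        linarith

end Subordination

/-- A Hardy-type inequality for subordinate kernels, with constant
`C_P = ∫₀^∞ ω(t)(1 - e^{-2dt})/d dt`. -/
theorem hardy_subordinate
    (d : ℕ) (hd : 2 ≤ d) (u : ℝ → ℝ → ℝ) (hu : IsHeatKernel d u)
    (ω : ℝ → ℝ) (hω : Measurable ω) (hω0 : ∀ t, 0 < t → 0 ≤ ω t)
    (hint : IntegrableOn (fun t => ω t * (1 - Real.exp (-(2 * (d : ℝ) * t)))) (Set.Ioi 0))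
    (F : Sph d → ℝ) (hF : SphSmooth F) (hFeven : ∀ σ, F (-σ) = F σ) :
    ∫ (σ : Sph d), (∫ (σ' : Sph d),
          (F σ' - F σ) ^ 2 * subordKernel u ω ⟪(σ' : E d), (σ : E d)⟫ ∂(sphMeasure d))
        ∂(sphMeasure d)
      ≤ (∫ t in Set.Ioi (0 : ℝ), ω t * (1 - Real.exp (-(2 * (d : ℝ) * t))) / d) *
          ∫ (σ : Sph d), ‖sphGrad F σ‖ ^ 2 ∂(sphMeasure d) := by
  have := isFiniteMeasure_sphMeasure (show 1 ≤ d by omega)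
  have hFm : Measurable F := hF.continuous.measurable
  simp_rw [norm_sphGrad_sq]
  set D := ∫ σ, ∑ i, sphD i F σ * sphD i F σ ∂sphMeasure d with hD
  have hD0 : 0 ≤ D := integral_nonneg fun σ => Finset.sum_nonneg fun i _ => mul_self_nonneg _
  have hexp (t : ℝ) (ht : 0 < t) : 0 ≤ 1 - Real.exp (-(2 * (d : ℝ) * t)) :=
    sub_nonneg.2 (Real.exp_le_one_iff.2 (neg_nonpos.2 (by positivity)))
  have hC0 (t : ℝ) (ht : 0 < t) : 0 ≤ ω t * (1 - Real.exp (-(2 * (d : ℝ) * t))) / d :=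
    div_nonneg (mul_nonneg (hω0 t ht) (hexp t ht)) (Nat.cast_nonneg d)
  have hnn : 0 ≤ (∫ t in Set.Ioi (0 : ℝ), ω t * (1 - Real.exp (-(2 * (d : ℝ) * t))) / d) * D :=
    mul_nonneg (setIntegral_nonneg measurableSet_Ioi hC0) hD0
  set k : Sph d → Sph d → ℝ → ℝ := fun σ σ' t =>
    (F σ' - F σ) ^ 2 * (u t ⟪(σ' : E d), (σ : E d)⟫ * ω t) with hk
  have hkm : Measurable fun p : (Sph d × Sph d) × ℝ => k p.1.1 p.1.2 p.2 := by
    have h1 : Measurable fun p : (Sph d × Sph d) × ℝ => ⟪(p.1.2 : E d), (p.1.1 : E d)⟫ :=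
      Continuous.measurable (by fun_prop)
    have h2 := hu.2.1.comp (measurable_snd.prodMk h1)
    exact (((hFm.comp (measurable_snd.comp measurable_fst)).sub
      (hFm.comp (measurable_fst.comp measurable_fst))).pow_const 2).mul
        (h2.mul (hω.comp measurable_snd))
  have hkm' := hkm.ennreal_ofReal
  refine (ENNReal.ofReal_le_ofReal_iff hnn).1 ?_
  calc _ ≤ ∫⁻ σ : Sph d, ∫⁻ σ' : Sph d, (∫⁻ t in Set.Ioi (0 : ℝ),
          ENNReal.ofReal (k σ σ' t)) ∂sphMeasure d ∂sphMeasure d := by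
        refine (ofReal_integral_le_lintegral_ofReal _).trans (lintegral_mono fun σ => ?_)
        refine (ofReal_integral_le_lintegral_ofReal _).trans (lintegral_mono fun σ' => ?_)
        simp only [subordKernel]
        rw [← integral_const_mul]
        exact ofReal_integral_le_lintegral_ofReal _
    _ = ∫⁻ σ : Sph d, (∫⁻ t in Set.Ioi (0 : ℝ), ∫⁻ σ' : Sph d,
          ENNReal.ofReal (k σ σ' t) ∂sphMeasure d) ∂sphMeasure d := by
        refine lintegral_congr fun σ => lintegral_lintegral_swap ?_
        exact (hkm'.comp (f := fun p : Sph d × ℝ => ((σ, p.1), p.2))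
          (by fun_prop)).aemeasurable
    _ = ∫⁻ t in Set.Ioi (0 : ℝ), ∫⁻ σ : Sph d, ∫⁻ σ' : Sph d,
          ENNReal.ofReal (k σ σ' t) ∂sphMeasure d ∂sphMeasure d := by
        refine lintegral_lintegral_swap ?_
        refine Measurable.aemeasurable ?_
        exact Measurable.lintegral_prod_right' (f := fun q : (Sph d × ℝ) × Sph d =>
          ENNReal.ofReal (k q.1.1 q.2 q.1.2)) (hkm'.comp
            (f := fun q : (Sph d × ℝ) × Sph d => ((q.1.1, q.2), q.1.2)) (by fun_prop))
    _ ≤ ∫⁻ t in Set.Ioi (0 : ℝ), ENNReal.ofReal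
          (ω t * (1 - Real.exp (-(2 * (d : ℝ) * t))) / d * D) := by
        refine setLIntegral_mono' measurableSet_Ioi fun t ht => ?_
        have h := hu.lintegral_sq_sub_mul_le (by omega) hF hFeven ht
        have e (σ σ' : Sph d) : ENNReal.ofReal (k σ σ' t) = ENNReal.ofReal (ω t) *
            ENNReal.ofReal ((F σ' - F σ) ^ 2 * u t ⟪(σ' : E d), (σ : E d)⟫) := by
          rw [← ENNReal.ofReal_mul (hω0 t ht)]
          congr 1
          simp only [hk]
          ring
        simp_rw [e]
        simp_rw [lintegral_const_mul' _ _ ENNReal.ofReal_ne_top]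
        refine (mul_le_mul_right h _).trans_eq ?_
        rw [← ENNReal.ofReal_mul (hω0 t ht), mul_div_assoc, ← hD, ← mul_assoc (ω t)]
    _ = _ := by
        rw [← integral_mul_const]
        refine (ofReal_integral_eq_lintegral_ofReal ((hint.div_const _).mul_const D) ?_).symm
        refine (ae_restrict_iff' measurableSet_Ioi).2 (.of_forall fun t ht => ?_)
        exact mul_nonneg (hC0 t ht) hD0
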